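/- arXiv:1808.01268 — 4 statements merged into one kernel-verified Lean document; each statement's English description precedes it below -/
import Mathlib

section
/- Every tuple of reflections of G5 that contains at least two entries from a conjugacy class R_i, at least one entry from the non-adjacent class of R_i, and at least one additional entry has, in its Hurwitz orbit, a tuple with two consecutive equal entries both lying in R_i. -/
noncomputable section

open Matrix Complex

/-- The `i`-th Hurwitz move on length-`k` tuples of group elements. -/
def IsHurwitzMove {G : Type*} [Group G] {k : ℕ} (t t' : Fin k → G) : Prop :=
  ∃ i : ℕ, ∃ h : i + 1 < k,
    t' ⟨i, Nat.lt_of_succ_lt h⟩ = t ⟨i + 1, h⟩ ∧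
    t' ⟨i + 1, h⟩ = (t ⟨i + 1, h⟩)⁻¹ * t ⟨i, Nat.lt_of_succ_lt h⟩ * t ⟨i + 1, h⟩ ∧
    ∀ j : Fin k, (j : ℕ) ≠ i → (j : ℕ) ≠ i + 1 → t' j = t j

/-- Two tuples lie in the same Hurwitz orbit. -/
def SameHurwitzOrbit {G : Type*} [Group G] {k : ℕ} (t t' : Fin k → G) : Prop :=
  Relation.EqvGen IsHurwitzMove t t'

/-- A group element `r` appears (as an entry) in the Hurwitz orbit of the tuple `t`. -/
def Appears {G : Type*} [Group G] {k : ℕ} (r : G) (t : Fin k → G) : Prop :=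
  ∃ s : Fin k → G, SameHurwitzOrbit t s ∧ ∃ j, s j = r

/-- A tuple has two consecutive equal entries. -/
def HasConsecutiveEqualPair {G : Type*} [Group G] {k : ℕ} (t : Fin k → G) : Prop :=
  ∃ i : ℕ, ∃ h : i + 1 < k, t ⟨i, Nat.lt_of_succ_lt h⟩ = t ⟨i + 1, h⟩

/-- Replace the `p`-th entry of a tuple by two consecutive copies of its square. -/
def doubleAt {G : Type*} [Group G] {m : ℕ} (t : Fin m → G) (p : Fin m) : Fin (m + 1) → G :=
  fun j =>
    if h1 : (j : ℕ) < (p : ℕ) then t ⟨j, h1.trans p.isLt⟩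
    else if h2 : (j : ℕ) ≤ (p : ℕ) + 1 then (t p) ^ 2
    else t ⟨(j : ℕ) - 1, by have := j.isLt; omega⟩

/-- `ω = e^(2πi/3)`. -/
def ω : ℂ := Complex.exp (2 * Real.pi * Complex.I / 3)

def AMat : Matrix (Fin 2) (Fin 2) ℂ := !![1, 0; 0, ω]

def BMat : Matrix (Fin 2) (Fin 2) ℂ :=
  !![(ω - ω ^ 2) / 3, ω ^ 2; (-2 * ω ^ 2) / 3, (-ω - 2 * ω ^ 2) / 3]

/-- The complex reflection group G₄ as the subgroup of GL(2,ℂ) generated by `AMat`, `BMat`. -/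
def G4 : Subgroup (GL (Fin 2) ℂ) :=
  Subgroup.closure {g : GL (Fin 2) ℂ |
    (g : Matrix (Fin 2) (Fin 2) ℂ) = AMat ∨ (g : Matrix (Fin 2) (Fin 2) ℂ) = BMat}

/-- The matrix underlying an element of G₄. -/
def mat (t : G4) : Matrix (Fin 2) (Fin 2) ℂ := ((t : GL (Fin 2) ℂ) : Matrix (Fin 2) (Fin 2) ℂ)

/-- A reflection in G₄: a non-identity element with eigenvalue 1. -/
def IsReflection (t : G4) : Prop := t ≠ 1 ∧ (mat t - 1).det = 0

/-- The conjugacy class R₁ of reflections of determinant ω. -/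
def R1 : Set G4 := {t | IsReflection t ∧ (mat t).det = ω}

/-- The conjugacy class R₂ of reflections of determinant ω². -/
def R2 : Set G4 := {t | IsReflection t ∧ (mat t).det = ω ^ 2}

/-- A Coxeter element of G₄: an element with a primitive 6th root of unity as eigenvalue. -/
def IsCoxeter (c : G4) : Prop :=
  ∃ ζ : ℂ, IsPrimitiveRoot ζ 6 ∧ (mat c - ζ • (1 : Matrix (Fin 2) (Fin 2) ℂ)).det = 0

/-- The relators of G₅: a³, b³, abab(baba)⁻¹. -/
def g5Rels : Set (FreeGroup (Fin 2)) :=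
  {FreeGroup.of 0 ^ 3, FreeGroup.of 1 ^ 3,
    FreeGroup.of 0 * FreeGroup.of 1 * FreeGroup.of 0 * FreeGroup.of 1 *
      (FreeGroup.of 1 * FreeGroup.of 0 * FreeGroup.of 1 * FreeGroup.of 0)⁻¹}

/-- The complex reflection group G₅, by its presentation ⟨a,b | a³ = b³ = 1, abab = baba⟩. -/
abbrev G5 := PresentedGroup g5Rels

def ga : G5 := PresentedGroup.of 0
def gb : G5 := PresentedGroup.of 1

/-- The conjugacy class of `a` in G₅. -/
def S1 : Set G5 := {t | IsConj ga t}
/-- The conjugacy class of `b` in G₅. -/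
def S2 : Set G5 := {t | IsConj gb t}
/-- The conjugacy class of `a²` in G₅. -/
def S3 : Set G5 := {t | IsConj (ga ^ 2) t}
/-- The conjugacy class of `b²` in G₅. -/
def S4 : Set G5 := {t | IsConj (gb ^ 2) t}

/-- A reflection in G₅: a conjugate of a, b, a², or b². -/
def IsReflection5 (t : G5) : Prop := t ∈ S1 ∨ t ∈ S2 ∨ t ∈ S3 ∨ t ∈ S4

/-- A Coxeter element of G₅: an element of order 12. -/
def IsCoxeter5 (c : G5) : Prop := orderOf c = 12

namespace G5Proof

inductive Pt | A | B | C | D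

open Pt

def mk4 (a b c d : Pt) : Pt → Pt
  | A => a
  | B => b
  | C => c
  | D => d

/-- conjugation by an element of the same kind -/
def tS : Pt → Pt → Pt
  | A => mk4 A C D B
  | B => mk4 D B A C
  | C => mk4 B D C A
  | D => mk4 C A B D

/-- conjugation by an element of the other kind -/
def tD : Pt → Pt → Pt
  | A => mk4 B C A D
  | B => mk4 C B D A
  | C => mk4 D A C B
  | D => mk4 A D B C

def tSq : Pt → Pt → Pt
  | A => mk4 A D B C
  | B => mk4 C B D A
  | C => mk4 D A C B
  | D => mk4 B C A D

def tDq : Pt → Pt → Pt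
  | A => mk4 C A B D
  | B => mk4 D B A C
  | C => mk4 B D C A
  | D => mk4 A C D B

section generic
variable {G : Type*} [Group G]

def e (x y : G) : Pt → G
  | A => x
  | B => y⁻¹ * x * y
  | C => y * x * y⁻¹
  | D => x⁻¹ * (y * x * y⁻¹) * x

def Acts (x y g : G) (π : Pt → Pt) : Prop := ∀ p, g⁻¹ * e x y p * g = e x y (π p)

theorem Acts.mul {x y g h : G} {π ρ : Pt → Pt} (hg : Acts x y g π) (hh : Acts x y h ρ) :
    Acts x y (g * h) (fun p => ρ (π p)) := by
  intro p
  rw [← hh, ← hg]; group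

theorem Acts.inv {x y g : G} {π ρ : Pt → Pt} (hg : Acts x y g π) (hr : ∀ p, π (ρ p) = p) :
    Acts x y g⁻¹ ρ := by
  intro p
  have := hg (ρ p)
  rw [hr] at this
  rw [← this]; group

theorem Acts.congr {x y g : G} {π ρ : Pt → Pt} (hg : Acts x y g π) (hr : ∀ p, π p = ρ p) :
    Acts x y g ρ := by
  intro p
  rw [← hr]; exact hg p

variable {x y : G}

theorem cube_conj (hx : x ^ 3 = 1) : x⁻¹ = x * x := by
  rw [inv_eq_iff_mul_eq_one, ← hx]; simp [pow_succ, mul_assoc]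

theorem actsX (hx : x ^ 3 = 1) (_hy : y ^ 3 = 1) (h : x * y * x * y = y * x * y * x) :
    Acts x y x (tS A) := by
  have hyx : y * x * y = x⁻¹ * (x * y * x * y) := by group
  intro p
  cases p
  · simp [e, tS, mk4]
  · change x⁻¹ * (y⁻¹ * x * y) * x = y * x * y⁻¹
    have h' : x * y * x * y * x⁻¹ = y * x * y := by rw [h]; group
    have : x⁻¹ * (y⁻¹ * x * y) * x * y = y * x := by
      calc x⁻¹ * (y⁻¹ * x * y) * x * y = x⁻¹ * y⁻¹ * (x * y * x * y) := by group
        _ = x⁻¹ * y⁻¹ * (y * x * y * x) := by rw [h]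
        _ = y * x := by group
    rw [← this]; group
  · simp [e, tS, mk4]
  · change x⁻¹ * (x⁻¹ * (y * x * y⁻¹) * x) * x = y⁻¹ * x * y
    have hi := cube_conj hx
    have h2 : x * x * (x * x) = x := by
      have : x * x * (x * x) = x ^ 3 * x := by simp only [pow_succ, pow_zero, one_mul, mul_assoc]
      rw [this, hx, one_mul]
    have : x⁻¹ * (x⁻¹ * (y * x * y⁻¹) * x) * x = x * (y * x * y⁻¹) * x⁻¹ := by
      have : x⁻¹ * (x⁻¹ * (y * x * y⁻¹) * x) * x = (x⁻¹ * x⁻¹) * (y * x * y⁻¹) * (x * x) := by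
        group
      rw [this, ← hi]
      rw [hi, h2]
    rw [this]
    have : y⁻¹ * (x * y * x * y) = x * y * x := by rw [h]; group
    have h3 : x * y * x = (y⁻¹ * x * y) * (x * y) := by rw [← this]; group
    calc x * (y * x * y⁻¹) * x⁻¹ = (x * y * x) * (y⁻¹ * x⁻¹) := by group
      _ = _ := by rw [h3]; group

theorem actsY (hx : x ^ 3 = 1) (hy : y ^ 3 = 1) (h : x * y * x * y = y * x * y * x) :
    Acts x y y (tD A) := by
  have hyi := cube_conj hy
  intro p
  cases p
  · simp [e, tD, mk4]
  · change y⁻¹ * (y⁻¹ * x * y) * y = y * x * y⁻¹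
    have : y⁻¹ * (y⁻¹ * x * y) * y = (y⁻¹ * y⁻¹) * x * (y * y) := by group
    have h2 : y * y * (y * y) = y := by
      have : y * y * (y * y) = y ^ 3 * y := by simp only [pow_succ, pow_zero, one_mul, mul_assoc]
      rw [this, hy, one_mul]
    rw [this, ← hyi, hyi, h2]
  · simp [e, tD, mk4, mul_assoc]
  · change y⁻¹ * (x⁻¹ * (y * x * y⁻¹) * x) * y = x⁻¹ * (y * x * y⁻¹) * x
    -- `u = y⁻¹ x y x⁻¹ y` commutes with `x`
    have hz1 : (x * y * x * y) * x = x * (x * y * x * y) := by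
      nth_rw 2 [h]; group
    have hz2 : (x * y * x * y) * y = y * (x * y * x * y) := by
      nth_rw 1 [h]
      nth_rw 1 [← h]
      nth_rw 1 [h]; group
    generalize hz : x * y * x * y = z at h hz1 hz2
    have hxy : x * y = z * (y⁻¹ * x⁻¹) := by rw [← hz]; group
    have hu : y⁻¹ * x * y * x⁻¹ * y = z * z * x⁻¹ := by
      have hxi := cube_conj hx
      have e1 : x⁻¹ * x⁻¹ = x := by
        rw [hxi, show x * x * (x * x) = x ^ 3 * x by simp only [pow_succ, pow_zero, one_mul, mul_assoc], hx, one_mul]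
      have e2 : y⁻¹ * y⁻¹ = y := by
        rw [hyi, show y * y * (y * y) = y ^ 3 * y by simp only [pow_succ, pow_zero, one_mul, mul_assoc], hy, one_mul]
      have hz2' : y⁻¹ * z = z * y⁻¹ := by
        rw [inv_mul_eq_iff_eq_mul, ← mul_assoc, ← hz2]; group
      calc y⁻¹ * x * y * x⁻¹ * y = y⁻¹ * (x * y) * x⁻¹ * y := by group
        _ = (y⁻¹ * z) * y⁻¹ * (x⁻¹ * x⁻¹) * y := by rw [hxy]; group
        _ = z * (y⁻¹ * y⁻¹) * (x⁻¹ * x⁻¹) * y := by rw [hz2']; group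
        _ = z * (y * x * y * x) * x⁻¹ := by rw [e1, e2]; group
        _ = _ := by rw [← h]
    have hc' : x * (y⁻¹ * x * y * x⁻¹ * y) = (y⁻¹ * x * y * x⁻¹ * y) * x := by
      rw [hu]
      have c : Commute z x := hz1
      exact ((c.symm.mul_right c.symm).mul_right (Commute.refl x).inv_right)
    calc y⁻¹ * (x⁻¹ * (y * x * y⁻¹) * x) * y
        = y⁻¹ * x⁻¹ * y * (x * (y⁻¹ * x * y * x⁻¹ * y)) * y⁻¹ * x := by group
      _ = _ := by rw [hc']; group

theorem actsSame (hx : x ^ 3 = 1) (hy : y ^ 3 = 1) (h : x * y * x * y = y * x * y * x) (q : Pt) :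
    Acts x y (e x y q) (tS q) := by
  have a := actsX hx hy h
  have b := actsY hx hy h
  have ai : Acts x y x⁻¹ (tSq A) := a.inv (by rintro (_|_|_|_) <;> rfl)
  have bi : Acts x y y⁻¹ (tDq A) := b.inv (by rintro (_|_|_|_) <;> rfl)
  cases q
  · exact a
  · exact ((bi.mul a).mul b).congr (by rintro (_|_|_|_) <;> rfl)
  · exact ((b.mul a).mul bi).congr (by rintro (_|_|_|_) <;> rfl)
  · exact ((ai.mul ((b.mul a).mul bi)).mul a).congr (by rintro (_|_|_|_) <;> rfl)

theorem actsDiff (hx : x ^ 3 = 1) (hy : y ^ 3 = 1) (h : x * y * x * y = y * x * y * x) (q : Pt) :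
    Acts x y (e y x q) (tD q) := by
  have a := actsX hx hy h
  have b := actsY hx hy h
  have ai : Acts x y x⁻¹ (tSq A) := a.inv (by rintro (_|_|_|_) <;> rfl)
  have bi : Acts x y y⁻¹ (tDq A) := b.inv (by rintro (_|_|_|_) <;> rfl)
  cases q
  · exact b
  · exact ((ai.mul b).mul a).congr (by rintro (_|_|_|_) <;> rfl)
  · exact ((a.mul b).mul ai).congr (by rintro (_|_|_|_) <;> rfl)
  · exact ((bi.mul ((a.mul b).mul ai)).mul b).congr (by rintro (_|_|_|_) <;> rfl)

end generic

theorem ga3 : ga ^ 3 = 1 :=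
  PresentedGroup.one_of_mem (rels := g5Rels) (x := FreeGroup.of 0 ^ 3) (by simp [g5Rels])

theorem gb3 : gb ^ 3 = 1 :=
  PresentedGroup.one_of_mem (rels := g5Rels) (x := FreeGroup.of 1 ^ 3) (by simp [g5Rels])

theorem gab : ga * gb * ga * gb = gb * ga * gb * ga := by
  have := PresentedGroup.one_of_mem (rels := g5Rels)
    (x := FreeGroup.of 0 * FreeGroup.of 1 * FreeGroup.of 0 * FreeGroup.of 1 *
      (FreeGroup.of 1 * FreeGroup.of 0 * FreeGroup.of 1 * FreeGroup.of 0)⁻¹) (by simp [g5Rels])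
  rw [map_mul, map_inv] at this
  exact mul_inv_eq_one.mp this

/-- Classes: kind (`true` for `a`) and whether squared. -/
abbrev Cl := Bool × Bool

def ek : Bool → Pt → G5
  | true => e ga gb
  | false => e gb ga

def sq : Bool → G5 → G5
  | true => fun g => g ^ 2
  | false => fun g => g

def r (c : Cl) (p : Pt) : G5 := sq c.2 (ek c.1 p)

def tk : Bool → Bool → Pt → Pt → Pt
  | true, true => tS
  | false, false => tS
  | true, false => tD
  | false, true => tD

def tkq : Bool → Bool → Pt → Pt → Pt
  | true, true => tSq
  | false, false => tSq
  | true, false => tDq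
  | false, true => tDq

def tb (c d : Cl) : Pt → Pt → Pt :=
  match d.2 with
  | true => tkq c.1 d.1
  | false => tk c.1 d.1

theorem ek_conj (c d : Bool) (p q : Pt) : (ek d q)⁻¹ * ek c p * ek d q = ek c (tk c d q p) := by
  cases c <;> cases d
  · exact actsSame gb3 ga3 gab.symm q p
  · exact actsDiff gb3 ga3 gab.symm q p
  · exact actsDiff ga3 gb3 gab q p
  · exact actsSame ga3 gb3 gab q p

theorem tk_tk (c d : Bool) (p q : Pt) : tk c d q (tk c d q p) = tkq c d q p := by
  cases c <;> cases d <;> cases p <;> cases q <;> rfl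

theorem sq_conj (b : Bool) (g h : G5) : h⁻¹ * sq b g * h = sq b (h⁻¹ * g * h) := by
  cases b
  · rfl
  · simp only [sq, pow_two]; group

theorem r_conj (c d : Cl) (p q : Pt) : (r d q)⁻¹ * r c p * r d q = r c (tb c d q p) := by
  obtain ⟨ck, cs⟩ := c
  obtain ⟨dk, ds⟩ := d
  simp only [r, sq_conj]
  congr 1
  cases ds
  · exact ek_conj ck dk p q
  · simp only [sq, tb]
    rw [← tk_tk, ← ek_conj, ← ek_conj, pow_two]; group

/-- The class. -/
def cl (c : Cl) : Set G5 := {t | IsConj (r c A) t}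

theorem S1_eq : S1 = cl (true, false) := rfl
theorem S2_eq : S2 = cl (false, false) := rfl
theorem S3_eq : S3 = cl (true, true) := rfl
theorem S4_eq : S4 = cl (false, true) := rfl

theorem r_conj_any (g : G5) : ∀ c p, ∃ q, g⁻¹ * r c p * g = r c q := by
  induction g using PresentedGroup.induction_on with
  | _ w =>
  induction w using FreeGroup.induction_on with
  | C1 => intro c p; exact ⟨p, by simp⟩
  | of i =>
    intro c p
    fin_cases i
    · exact ⟨_, r_conj c (true, false) p A⟩
    · exact ⟨_, r_conj c (false, false) p A⟩
  | inv_of i _ =>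
    intro c p
    have key : ∀ d : Bool, ∃ q, (ek d A)⁻¹⁻¹ * r c p * (ek d A)⁻¹ = r c q := by
      intro d
      have h3 : ek d A ^ 3 = 1 := by
        cases d
        · exact gb3
        · exact ga3
      refine ⟨_, Eq.trans ?_ (r_conj c (d, true) p A)⟩
      have : (ek d A)⁻¹ = r (d, true) A := by
        rw [cube_conj h3, ← pow_two]; rfl
      rw [this]
    fin_cases i
    · exact key true
    · exact key false
  | mul v w hv hw =>
    intro c p
    obtain ⟨q, hq⟩ := hv c p
    obtain ⟨q', hq'⟩ := hw c q
    refine ⟨q', ?_⟩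
    rw [← hq', ← hq, map_mul]; group

theorem mem_cl {c : Cl} {t : G5} : t ∈ cl c ↔ ∃ p, t = r c p := by
  constructor
  · intro h
    obtain ⟨g, hg⟩ := isConj_iff.mp h
    obtain ⟨q, hq⟩ := r_conj_any g⁻¹ c A
    exact ⟨q, by rw [← hq, ← hg]; group⟩
  · rintro ⟨p, rfl⟩
    have key : ∀ d q, IsConj (r c q) (r c (tb c d A q)) := by
      intro d q
      rw [← r_conj]
      exact isConj_iff.mpr ⟨(r d A)⁻¹, by group⟩
    change IsConj (r c A) (r c p)
    obtain ⟨ck, cs⟩ := c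
    have h1 := key (!ck, false) A
    have h2 := key (!ck, false) B
    have h3 := key (ck, false) C
    cases ck <;> cases p
    · exact IsConj.refl _
    · exact h1
    · exact h1.trans h2
    · exact (h1.trans h2).trans h3
    · exact IsConj.refl _
    · exact h1
    · exact h1.trans h2
    · exact (h1.trans h2).trans h3

/-! Disjointness -/

def phi : G5 →* Multiplicative (ZMod 3) :=
  PresentedGroup.toGroup (f := fun i : Fin 2 => if i = 0 then Multiplicative.ofAdd 1 else 1) (by
    intro w hw
    simp only [g5Rels, Set.mem_insert_iff, Set.mem_singleton_iff] at hw
    rcases hw with rfl | rfl | rfl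
    · simp; decide
    · simp
    · simp)

theorem phi_a : phi ga = Multiplicative.ofAdd 1 := by
  simp [phi, ga]
theorem phi_b : phi gb = 1 := by
  simp [phi, gb]

theorem phi_cl (c : Cl) (t : G5) (ht : t ∈ cl c) : phi t = 1 ↔ c.1 = false := by
  obtain ⟨g, hg⟩ := isConj_iff.mp ht
  have : phi t = phi (r c A) := by
    rw [← hg, map_mul, map_mul, map_inv, mul_comm, ← mul_assoc, inv_mul_cancel, one_mul]
  rw [this]
  obtain ⟨_|_, _|_⟩ := c
  · simp [r, sq, ek, e, phi_b]
  · simp [r, sq, ek, e, phi_b]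
  · simp only [r, sq, ek, e, phi_a]; decide
  · simp only [r, sq, ek, e, phi_a, map_pow]; decide

/-! Model -/

abbrev St := (Cl × Pt) × (Cl × Pt) × (Cl × Pt) × (Cl × Pt)

def act (x y : Cl × Pt) : Cl × Pt := (x.1, tb x.1 y.1 y.2 x.2)

inductive Mv | a | b | c

def step (m : Mv) (s : St) : St :=
  match m with
  | .a => (s.2.1, act s.1 s.2.1, s.2.2.1, s.2.2.2)
  | .b => (s.1, s.2.2.1, act s.2.1 s.2.2.1, s.2.2.2)
  | .c => (s.1, s.2.1, s.2.2.2, act s.2.2.1 s.2.2.2)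

def run : List Mv → St → St
  | [], s => s
  | m :: w, s => run w (step m s)

def pb : Pt → Pt → Bool
  | A, A => true
  | B, B => true
  | C, C => true
  | D, D => true
  | _, _ => false

def bb : Bool → Bool → Bool
  | true, b => b
  | false, b => !b

def eqc (c : Cl) (x y : Cl × Pt) : Bool :=
  bb x.1.1 c.1 && bb x.1.2 c.2 && bb y.1.1 c.1 && bb y.1.2 c.2 && pb x.2 y.2

theorem eqc_spec (c : Cl) (x y : Cl × Pt) (h : eqc c x y = true) : x = y ∧ y.1 = c := by
  obtain ⟨⟨_|_, _|_⟩, _|_|_|_⟩ := x <;> obtain ⟨⟨_|_, _|_⟩, _|_|_|_⟩ := y <;>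
  obtain ⟨_|_, _|_⟩ := c <;> first | exact ⟨rfl, rfl⟩ | exact absurd h (by decide)

def good (c : Cl) (s : St) : Bool :=
  eqc c s.1 s.2.1 || eqc c s.2.1 s.2.2.1 || eqc c s.2.2.1 s.2.2.2

open Mv in
def words : List (List Mv) :=
  [[c,b,b,c,c,c,c], [a,c,c,b,b,a,c], [b,a,a,a], [b,b,c,b,b,a], [c], [b,b], [a,b,b],
   [a,a,b,c,c,b], [a,c,b,b]]

def test (c : Cl) (s : St) : Bool := words.any fun w => good c (run w s)

def allP (f : Pt → Bool) : Bool := f A && f B && f C && f D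

theorem allP_spec (f : Pt → Bool) (h : allP f = true) (p : Pt) : f p = true := by
  simp only [allP, Bool.and_eq_true] at h
  cases p <;> tauto

def allB (f : Bool → Bool) : Bool := f true && f false

theorem allB_spec (f : Bool → Bool) (h : allB f = true) (p : Bool) : f p = true := by
  simp only [allB, Bool.and_eq_true] at h
  cases p <;> tauto

def testAll : Bool :=
  allB fun c1 => allB fun c2 => allB fun x1 => allB fun x2 =>
  allP fun p => allP fun q => allP fun u => allP fun v =>
  test (c1, c2) (((c1, c2), p), ((c1, c2), q), ((!c1, !c2), u), ((x1, x2), v))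

theorem testAll_true : testAll = true := by decide +kernel

theorem test_true (c x : Cl) (p q u v : Pt) :
    test c ((c, p), (c, q), ((!c.1, !c.2), u), (x, v)) = true := by
  have h := testAll_true
  unfold testAll at h
  have h := allB_spec _ h c.1
  have h := allB_spec _ h c.2
  have h := allB_spec _ h x.1
  have h := allB_spec _ h x.2
  have h := allP_spec _ h p
  have h := allP_spec _ h q
  have h := allP_spec _ h u
  exact allP_spec _ h v

/-! Hurwitz moves on tuples -/

theorem exists_move {G : Type*} [Group G] {k : ℕ} (t : Fin k → G) (i : ℕ) (h : i + 1 < k) :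
    ∃ s : Fin k → G, SameHurwitzOrbit t s ∧
      s ⟨i, Nat.lt_of_succ_lt h⟩ = t ⟨i + 1, h⟩ ∧
      s ⟨i + 1, h⟩ = (t ⟨i + 1, h⟩)⁻¹ * t ⟨i, Nat.lt_of_succ_lt h⟩ * t ⟨i + 1, h⟩ ∧
      ∀ j : Fin k, (j : ℕ) ≠ i → (j : ℕ) ≠ i + 1 → s j = t j := by
  let s : Fin k → G := fun j => if (j : ℕ) = i then t ⟨i + 1, h⟩ else
    if (j : ℕ) = i + 1 then (t ⟨i + 1, h⟩)⁻¹ * t ⟨i, Nat.lt_of_succ_lt h⟩ * t ⟨i + 1, h⟩ else t j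
  have h1 : s ⟨i, Nat.lt_of_succ_lt h⟩ = t ⟨i + 1, h⟩ := by simp [s]
  have h2 : s ⟨i + 1, h⟩ = (t ⟨i + 1, h⟩)⁻¹ * t ⟨i, Nat.lt_of_succ_lt h⟩ * t ⟨i + 1, h⟩ := by
    simp [s]
  have h3 : ∀ j : Fin k, (j : ℕ) ≠ i → (j : ℕ) ≠ i + 1 → s j = t j := by
    intro j hi hj; simp [s, hi, hj]
  exact ⟨s, Relation.EqvGen.rel _ _ ⟨i, h, h1, h2, h3⟩, h1, h2, h3⟩

def rr (x : Cl × Pt) : G5 := r x.1 x.2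

theorem rr_act (x y : Cl × Pt) : (rr y)⁻¹ * rr x * rr y = rr (act x y) := r_conj _ _ _ _

def Match {k : ℕ} (hk : 4 ≤ k) (t : Fin k → G5) (s : St) : Prop :=
  t ⟨0, by omega⟩ = rr s.1 ∧ t ⟨1, by omega⟩ = rr s.2.1 ∧ t ⟨2, by omega⟩ = rr s.2.2.1 ∧
    t ⟨3, by omega⟩ = rr s.2.2.2

theorem match_step {k : ℕ} (hk : 4 ≤ k) (t : Fin k → G5) (s : St) (h : Match hk t s) (m : Mv) :
    ∃ t', SameHurwitzOrbit t t' ∧ Match hk t' (step m s) := by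
  obtain ⟨h0, h1, h2, h3⟩ := h
  cases m
  · obtain ⟨t', ho, e1, e2, e3⟩ := exists_move t 0 (by omega)
    refine ⟨t', ho, e1.trans h1, e2.trans ?_, (e3 _ ?_ ?_).trans h2, (e3 _ ?_ ?_).trans h3⟩
    · simp only [zero_add]; rw [h0, h1, rr_act]; rfl
    all_goals simp
  · obtain ⟨t', ho, e1, e2, e3⟩ := exists_move t 1 (by omega)
    refine ⟨t', ho, (e3 _ ?_ ?_).trans h0, e1.trans h2, e2.trans ?_, (e3 _ ?_ ?_).trans h3⟩
    rotate_left 2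
    · simp only [Nat.reduceAdd]; rw [h1, h2, rr_act]; rfl
    all_goals simp
  · obtain ⟨t', ho, e1, e2, e3⟩ := exists_move t 2 (by omega)
    refine ⟨t', ho, (e3 _ ?_ ?_).trans h0, (e3 _ ?_ ?_).trans h1, e1.trans h3, e2.trans ?_⟩
    rotate_left 4
    · simp only [Nat.reduceAdd]; rw [h2, h3, rr_act]; rfl
    all_goals simp

theorem match_run {k : ℕ} (hk : 4 ≤ k) (w : List Mv) : ∀ (t : Fin k → G5) (s : St),
    Match hk t s → ∃ t', SameHurwitzOrbit t t' ∧ Match hk t' (run w s) := by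
  induction w with
  | nil => intro t s h; exact ⟨t, Relation.EqvGen.refl _, h⟩
  | cons m w ih =>
    intro t s h
    obtain ⟨t', ho, h'⟩ := match_step hk t s h m
    obtain ⟨t'', ho', h''⟩ := ih t' _ h'
    exact ⟨t'', ho.trans _ _ _ ho', h''⟩

theorem four {k : ℕ} (hk : 4 ≤ k) (c x : Cl) (t : Fin k → G5)
    (h0 : t ⟨0, by omega⟩ ∈ cl c) (h1 : t ⟨1, by omega⟩ ∈ cl c)
    (h2 : t ⟨2, by omega⟩ ∈ cl (!c.1, !c.2)) (h3 : t ⟨3, by omega⟩ ∈ cl x) :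
    ∃ s : Fin k → G5, SameHurwitzOrbit t s ∧
      ∃ i : ℕ, ∃ h : i + 1 < k,
        s ⟨i, Nat.lt_of_succ_lt h⟩ = s ⟨i + 1, h⟩ ∧ s ⟨i + 1, h⟩ ∈ cl c := by
  obtain ⟨p, hp⟩ := mem_cl.mp h0
  obtain ⟨q, hq⟩ := mem_cl.mp h1
  obtain ⟨u, hu⟩ := mem_cl.mp h2
  obtain ⟨v, hv⟩ := mem_cl.mp h3
  have ht := test_true c x p q u v
  obtain ⟨w, -, hw⟩ := List.any_eq_true.mp ht
  obtain ⟨t', ho, e0, e1, e2, e3⟩ := match_run hk w t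
    ((c, p), (c, q), ((!c.1, !c.2), u), (x, v)) ⟨hp, hq, hu, hv⟩
  refine ⟨t', ho, ?_⟩
  have fin : ∀ y : Cl × Pt, y.1 = c → rr y ∈ cl c := by
    rintro y rfl; exact mem_cl.mpr ⟨_, rfl⟩
  simp only [good, Bool.or_eq_true] at hw
  rcases hw with (hw | hw) | hw
  · obtain ⟨ha, hb⟩ := eqc_spec _ _ _ hw
    exact ⟨0, by omega, by rw [e0, ha]; exact e1.symm, by
      have := fin _ hb; rw [← e1] at this; exact this⟩
  · obtain ⟨ha, hb⟩ := eqc_spec _ _ _ hw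
    exact ⟨1, by omega, by rw [e1, ha]; exact e2.symm, by
      have := fin _ hb; rw [← e2] at this; exact this⟩
  · obtain ⟨ha, hb⟩ := eqc_spec _ _ _ hw
    exact ⟨2, by omega, by rw [e2, ha]; exact e3.symm, by
      have := fin _ hb; rw [← e3] at this; exact this⟩

theorem perm_orbit {n : ℕ} (σ : Equiv.Perm (Fin (n + 1))) : ∀ t : Fin (n + 1) → G5,
    ∃ s, SameHurwitzOrbit t s ∧ ∀ i, IsConj (t (σ i)) (s i) := by
  have hσ : σ ∈ Submonoid.closure (Set.range fun i : Fin n => Equiv.swap i.castSucc i.succ) := by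
    rw [Equiv.Perm.mclosure_swap_castSucc_succ]; trivial
  induction hσ using Submonoid.closure_induction with
  | mem σ h =>
    obtain ⟨i, rfl⟩ := h
    intro t
    obtain ⟨s, ho, e1, e2, e3⟩ := exists_move t i (by omega)
    refine ⟨s, ho, fun j => ?_⟩
    by_cases h1 : j = i.castSucc
    · subst h1
      simp only [Equiv.swap_apply_left]
      have : s i.castSucc = t i.succ := e1
      rw [this]
    · by_cases h2 : j = i.succ
      · subst h2
        simp only [Equiv.swap_apply_right]
        have : s i.succ = (t i.succ)⁻¹ * t i.castSucc * t i.succ := e2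
        rw [this]
        exact isConj_iff.mpr ⟨(t i.succ)⁻¹, by group⟩
      · simp only [Equiv.swap_apply_of_ne_of_ne h1 h2]
        rw [e3 j (fun h => h1 (Fin.ext h)) (fun h => h2 (Fin.ext h))]
  | one => intro t; exact ⟨t, Relation.EqvGen.refl _, fun i => IsConj.refl _⟩
  | mul σ τ _ _ hσ hτ =>
    intro t
    obtain ⟨s, ho, hs⟩ := hσ t
    obtain ⟨s', ho', hs'⟩ := hτ s
    exact ⟨s', ho.trans _ _ _ ho', fun i => (hs (τ i)).trans (hs' i)⟩

theorem exists_perm {k : ℕ} (hk : 3 ≤ k) (a b c : Fin k) (hab : a ≠ b) (hac : a ≠ c) (hbc : b ≠ c) :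
    ∃ σ : Equiv.Perm (Fin k), σ ⟨0, by omega⟩ = a ∧ σ ⟨1, by omega⟩ = b ∧ σ ⟨2, by omega⟩ = c := by
  have hi : Function.Injective (![a, b, c]) := by
    intro i j h
    fin_cases i <;> fin_cases j <;> simp_all
  obtain ⟨σ, hσ⟩ := (Equiv.Perm.isMultiplyPretransitive (Fin k) 3).exists_smul_eq
    (Fin.castLEEmb hk) ⟨_, hi⟩
  have := fun i => DFunLike.congr_fun hσ i
  exact ⟨σ, this 0, this 1, this 2⟩

theorem main (c : Cl) (k : ℕ) (hk : 4 ≤ k) (t : Fin k → G5) (ht : ∀ i, IsReflection5 (t i))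
    (h2 : 2 ≤ {i : Fin k | t i ∈ cl c}.ncard)
    (h1 : 1 ≤ {i : Fin k | t i ∈ cl (!c.1, !c.2)}.ncard) :
    ∃ s : Fin k → G5, SameHurwitzOrbit t s ∧
      ∃ i : ℕ, ∃ h : i + 1 < k,
        s ⟨i, Nat.lt_of_succ_lt h⟩ = s ⟨i + 1, h⟩ ∧ s ⟨i + 1, h⟩ ∈ cl c := by
  obtain ⟨i1, hi1, i2, hi2, h12⟩ := (Set.one_lt_ncard_iff_nontrivial).mp h2
  obtain ⟨j, hj⟩ := Set.nonempty_of_ncard_ne_zero (Nat.one_le_iff_ne_zero.mp h1)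
  have dis : ∀ i, t i ∈ cl c → i ≠ j := by
    rintro i hi rfl
    have e1 := phi_cl _ _ hi
    have e2 := phi_cl _ _ hj
    rw [e1] at e2
    cases h : c.1 <;> simp [h] at e2
  obtain ⟨σ, s0, s1, s2⟩ := exists_perm (by omega) i1 i2 j h12 (dis _ hi1) (dis _ hi2)
  obtain ⟨n, rfl⟩ : ∃ n, k = n + 1 := ⟨k - 1, by omega⟩
  obtain ⟨s, ho, hs⟩ := perm_orbit σ t
  have mv : ∀ {d : Cl} {x y : G5}, IsConj x y → x ∈ cl d → y ∈ cl d := fun h h' => h'.trans h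
  obtain ⟨x, hx⟩ : ∃ x, t (σ ⟨3, by omega⟩) ∈ cl x := by
    rcases ht (σ ⟨3, by omega⟩) with h | h | h | h
    · exact ⟨(true, false), h⟩
    · exact ⟨(false, false), h⟩
    · exact ⟨(true, true), h⟩
    · exact ⟨(false, true), h⟩
  obtain ⟨s', ho', h'⟩ := four hk c x s (mv (hs _) (by rw [s0]; exact hi1))
    (mv (hs _) (by rw [s1]; exact hi2)) (mv (hs _) (by rw [s2]; exact hj)) (mv (hs _) hx)
  exact ⟨s', ho.trans _ _ _ ho', h'⟩

end G5Proof

theorem g5_two_two_one_pair (Ri Rj : Set G5)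
    (h : (Ri = S1 ∧ Rj = S4) ∨ (Ri = S2 ∧ Rj = S3) ∨
         (Ri = S3 ∧ Rj = S2) ∨ (Ri = S4 ∧ Rj = S1))
    (k : ℕ) (hk : 4 ≤ k) (t : Fin k → G5) (ht : ∀ i, IsReflection5 (t i))
    (h2 : 2 ≤ {i : Fin k | t i ∈ Ri}.ncard)
    (h1 : 1 ≤ {i : Fin k | t i ∈ Rj}.ncard) :
    ∃ s : Fin k → G5, SameHurwitzOrbit t s ∧
      ∃ i : ℕ, ∃ h : i + 1 < k,
        s ⟨i, Nat.lt_of_succ_lt h⟩ = s ⟨i + 1, h⟩ ∧ s ⟨i + 1, h⟩ ∈ Ri := by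
  rcases h with ⟨rfl, rfl⟩ | ⟨rfl, rfl⟩ | ⟨rfl, rfl⟩ | ⟨rfl, rfl⟩
  · exact G5Proof.main (true, false) k hk t ht h2 h1
  · exact G5Proof.main (false, false) k hk t ht h2 h1
  · exact G5Proof.main (true, true) k hk t ht h2 h1
  · exact G5Proof.main (false, true) k hk t ht h2 h1
end
end

section
/- Every reflection factorization of a Coxeter element of G5 of length at least five has, in its Hurwitz orbit, a reflection factorization with two consecutive equal entries. -/
noncomputable section

open Matrix Complex

namespace G5Pair

/-! Index model: `i < 16` stands for class `i / 4` and vertex `i % 4`. -/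

def tb : Fin 4 → Fin 4 → Fin 4 := ![![0, 3, 1, 2], ![2, 1, 3, 0], ![3, 0, 2, 1], ![1, 2, 0, 3]]

def opTable : ℕ :=
  177613243245730783039151839267004139479849211828336254464017114784654584133289818086589717662894713560622851807135466785966724080758331322280351796052901255853923812458944889229140370050378128109635047623608584877337219301517831594250746533212373339470706558728102156661832727663968664078661416377075288252720

def op (i j : ℕ) : ℕ :=
  Nat.mod (Nat.shiftRight opTable
    (Nat.mul 4 (Nat.add (Nat.mul 16 (Nat.mod i 16)) (Nat.mod j 16)))) 16

def mv0 (l : List ℕ) : List ℕ :=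
  @List.rec ℕ (fun _ => List ℕ) []
    (fun x r _ => @List.rec ℕ (fun _ => List ℕ) (x :: r) (fun y r' _ => y :: op x y :: r') r) l

def mv (i : ℕ) : List ℕ → List ℕ :=
  @Nat.rec (fun _ => List ℕ → List ℕ) mv0
    (fun _ ih l => @List.rec ℕ (fun _ => List ℕ) [] (fun x r _ => x :: ih r) l) i

def memb (x : ℕ) (l : List ℕ) : Bool :=
  @List.rec ℕ (fun _ => Bool) false
    (fun y _ ih => @Bool.rec (fun _ => Bool) ih true (Nat.beq x y)) l

def dup (l : List ℕ) : Bool :=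
  @List.rec ℕ (fun _ => Bool) false
    (fun x r ih => @Bool.rec (fun _ => Bool) ih true (memb x r)) l

def run (W : List ℕ) : List ℕ → Bool :=
  @List.rec ℕ (fun _ => List ℕ → Bool) dup
    (fun i _ ih l => @Bool.rec (fun _ => Bool) (ih (mv i l)) true (dup l)) W

theorem bor (x y : Bool) : @Bool.rec (fun _ => Bool) y true x = (x || y) := by cases x <;> rfl

theorem memb_cons (x y : ℕ) (r : List ℕ) : memb x (y :: r) = (Nat.beq x y || memb x r) := bor _ _

theorem dup_cons (x : ℕ) (r : List ℕ) : dup (x :: r) = (memb x r || dup r) := bor _ _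

theorem run_cons (i : ℕ) (W l : List ℕ) : run (i :: W) l = (dup l || run W (mv i l)) := bor _ _

def w3 : List ℕ := [1, 0, 0, 0, 0, 0, 1, 1, 0, 0]
def w4 : List ℕ := [1, 1, 2, 1, 1, 2, 0, 0, 0, 1, 2, 1, 0, 2, 0, 0, 2, 1, 1, 2, 0, 1, 0, 1, 1, 1, 2,
  2, 0, 0]
def w5 : List ℕ := [1, 2, 3, 1, 3, 3, 1, 1, 0, 0, 0, 0, 2, 1, 2, 0, 2, 0, 1, 3, 0, 0, 1, 0, 2, 0, 0,
  3, 1, 2, 0, 3, 1, 1, 0, 1, 3, 3, 3, 3, 0, 2, 3, 3, 1, 3, 1, 0, 1, 0, 1, 3, 2, 3, 2, 2, 0, 0, 3, 1,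
  0, 0, 1, 1, 2, 0, 3, 2, 0, 2]

def chk : List (List ℕ) → List ℕ → ℕ → Bool
  | [], l, _ => run w5 l
  | W :: Ws, l, c => run W l ||
      [0, 1, 2, 3, 4, 5, 6, 7, 8, 9, 10, 11, 12, 13, 14, 15].all
        fun x => Nat.blt (x / 4) c || chk Ws (l ++ [x]) (x / 4)

theorem op_lt : ∀ i < 16, ∀ j < 16, op i j < 16 ∧ op i j / 4 = i / 4 := by decide +kernel

theorem chk_true : chk [[], [], [], w3, w4] [] 0 = true := by decide +kernel

section lists
variable {G : Type*} [Group G]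

inductive Step : List G → List G → Prop
  | mk (p : List G) (x y : G) (q : List G) :
      Step (p ++ x :: y :: q) (p ++ y :: (y⁻¹ * x * y) :: q)

abbrev Reach : List G → List G → Prop := Relation.ReflTransGen Step

def Good (L : List G) : Prop := ∃ L', Reach L L' ∧ ∃ p x q, L' = p ++ x :: x :: q

theorem Step.cons {L L' : List G} (h : Step L L') (x : G) : Step (x :: L) (x :: L') := by
  obtain ⟨p, a, b, q⟩ := h
  exact Step.mk (x :: p) a b q

theorem Step.app {L L' : List G} (h : Step L L') (r : List G) : Step (L ++ r) (L' ++ r) := by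
  obtain ⟨p, a, b, q⟩ := h
  simpa using Step.mk p a b (q ++ r)

theorem Reach.cons {L L' : List G} (h : Reach L L') (x : G) : Reach (x :: L) (x :: L') :=
  Relation.ReflTransGen.lift (fun l => x :: l) (fun _ _ h => Step.cons h x) _ _ h

theorem Reach.app {L L' : List G} (h : Reach L L') (r : List G) : Reach (L ++ r) (L' ++ r) :=
  Relation.ReflTransGen.lift (fun l => l ++ r) (fun _ _ h => Step.app h r) _ _ h

theorem Good.app {L : List G} (h : Good L) (r : List G) : Good (L ++ r) := by
  obtain ⟨L', h, p, x, q, rfl⟩ := h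
  exact ⟨_, Reach.app h r, p, x, q ++ r, by simp⟩

theorem Good.cons {L : List G} (h : Good L) (y : G) : Good (y :: L) := by
  obtain ⟨L', h, p, x, q, rfl⟩ := h
  exact ⟨_, Reach.cons h y, y :: p, x, q, by simp⟩

theorem Good.of_reach {L L' : List G} (h : Reach L L') (h' : Good L') : Good L := by
  obtain ⟨L'', h2, h3⟩ := h'
  exact ⟨L'', h.trans h2, h3⟩

theorem reach_front (x : G) (p q : List G) : ∃ p', Reach (p ++ x :: q) (x :: p' ++ q) := by
  induction p with
  | nil => exact ⟨[], by simpa using Relation.ReflTransGen.refl⟩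
  | cons y p ih =>
    obtain ⟨p', h⟩ := ih
    refine ⟨(x⁻¹ * y * x) :: p', ?_⟩
    exact (Reach.cons h y).tail (Step.mk [] y x (p' ++ q))

theorem good_of_mem (x : G) (L : List G) (h : x ∈ L) : Good (x :: L) := by
  obtain ⟨p, q, rfl⟩ := List.append_of_mem h
  obtain ⟨p', h'⟩ := reach_front x p q
  exact ⟨_, Reach.cons h' x, [], x, p' ++ q, by simp⟩

variable (R : ℕ → G) (hR : ∀ i j, (R j)⁻¹ * R i * R j = R (op i j))

theorem memb_mem (x : ℕ) (l : List ℕ) (h : memb x l = true) : x ∈ l := by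
  induction l with
  | nil => simp [memb] at h
  | cons y r ih =>
    simp only [memb_cons, Bool.or_eq_true, Nat.beq_eq] at h
    rcases h with h | h
    · simp [h]
    · simp [ih h]

theorem dup_good (l : List ℕ) (h : dup l = true) : Good (l.map R) := by
  induction l with
  | nil => simp [dup] at h
  | cons x r ih =>
    simp only [dup_cons, Bool.or_eq_true] at h
    rcases h with h | h
    · exact good_of_mem _ _ (List.mem_map_of_mem (memb_mem x r h))
    · exact (ih h).cons _

include hR

theorem mv_reach (i : ℕ) (l : List ℕ) : Reach (l.map R) ((mv i l).map R) := by
  induction i generalizing l with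
  | zero =>
    match l with
    | [] => exact Relation.ReflTransGen.refl
    | [x] => exact Relation.ReflTransGen.refl
    | x :: y :: r =>
      have := Step.mk [] (R x) (R y) (r.map R)
      rw [hR] at this
      exact Relation.ReflTransGen.single this
  | succ i ih =>
    match l with
    | [] => exact Relation.ReflTransGen.refl
    | x :: r => exact Reach.cons (ih r) _

theorem run_good (W l : List ℕ) (h : run W l = true) : Good (l.map R) := by
  induction W generalizing l with
  | nil => exact dup_good R l h
  | cons i W ih =>
    simp only [run_cons, Bool.or_eq_true] at h
    rcases h with h | h
    · exact dup_good R l h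
    · exact Good.of_reach (mv_reach R hR i l) (ih _ h)

theorem chk_good (Ws : List (List ℕ)) (l : List ℕ) (c : ℕ) (h : chk Ws l c = true) (m : List ℕ)
    (hm : m.length = Ws.length) (hb : ∀ x ∈ m, x < 16)
    (hs : List.Pairwise (· ≤ ·) (c :: m.map (· / 4))) : Good ((l ++ m).map R) := by
  induction Ws generalizing l c m with
  | nil =>
    have : m = [] := by simpa using hm
    subst this
    simpa using run_good R hR _ _ h
  | cons W Ws ih =>
    simp only [chk, Bool.or_eq_true] at h
    rcases h with h | h
    · rw [List.map_append]
      exact (run_good R hR _ _ h).app _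
    · match m with
      | [] => simp at hm
      | x :: m =>
        have hx : x < 16 := hb x (by simp)
        have h2 := List.all_eq_true.1 h x (by simp; omega)
        have hcx : c ≤ x / 4 := by
          have := (List.pairwise_cons.1 hs).1 (x / 4) (by simp)
          exact this
        have h3 : chk Ws (l ++ [x]) (x / 4) = true := by
          rcases Bool.or_eq_true _ _ ▸ h2 with h2 | h2
          · have : x / 4 < c := by simpa [Nat.blt_eq] using h2
            omega
          · exact h2
        have := ih (l ++ [x]) (x / 4) h3 m (by simpa using hm)
          (fun y hy => hb y (by simp [hy])) (by simpa using (List.pairwise_cons.1 hs).2)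
        simpa using this

theorem ins (x : ℕ) (hx : x < 16) (m : List ℕ) (hb : ∀ y ∈ m, y < 16)
    (hs : List.Pairwise (· ≤ ·) (m.map (· / 4))) :
    ∃ m' : List ℕ, Reach ((x :: m).map R) (m'.map R) ∧ m'.length = m.length + 1 ∧
      (∀ y ∈ m', y < 16) ∧ List.Pairwise (· ≤ ·) (m'.map (· / 4)) ∧
      ∀ y ∈ m', y / 4 = x / 4 ∨ ∃ w ∈ m, y / 4 = w / 4 := by
  induction m generalizing x with
  | nil => exact ⟨[x], Relation.ReflTransGen.refl, by simp, by simpa using hx, by simp, by simp⟩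
  | cons y m ih =>
    have hy : y < 16 := hb y (by simp)
    have hs' := List.pairwise_cons.1 hs
    by_cases hxy : x / 4 ≤ y / 4
    · refine ⟨x :: y :: m, Relation.ReflTransGen.refl, by simp, ?_, ?_, ?_⟩
      · intro w hw
        rcases List.mem_cons.1 hw with rfl | hw
        · exact hx
        · exact hb w hw
      · refine List.pairwise_cons.2 ⟨?_, hs⟩
        intro w hw
        rcases List.mem_cons.1 hw with rfl | hw
        · exact hxy
        · exact hxy.trans (hs'.1 w hw)
      · intro w hw
        rcases List.mem_cons.1 hw with rfl | hw
        · exact Or.inl rfl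
        · exact Or.inr ⟨w, hw, rfl⟩
    · obtain ⟨h1, h2⟩ := op_lt x hx y hy
      obtain ⟨m', hr, hl, hb', hp, hc⟩ := ih (op x y) h1 (fun w hw => hb w (by simp [hw])) hs'.2
      refine ⟨y :: m', ?_, by simp [hl], ?_, ?_, ?_⟩
      · have := Step.mk [] (R x) (R y) (m.map R)
        rw [hR] at this
        exact Relation.ReflTransGen.head this (Reach.cons hr (R y))
      · intro w hw
        rcases List.mem_cons.1 hw with rfl | hw
        · exact hy
        · exact hb' w hw
      · refine List.pairwise_cons.2 ⟨?_, hp⟩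
        intro w hw
        obtain ⟨v, hv, rfl⟩ := List.mem_map.1 hw
        rcases hc v hv with h | ⟨u, hu, h⟩
        · show y / 4 ≤ v / 4
          omega
        · have := hs'.1 (u / 4) (List.mem_map.2 ⟨u, hu, rfl⟩)
          show y / 4 ≤ v / 4
          rw [h]; exact this
      · intro w hw
        rcases List.mem_cons.1 hw with rfl | hw
        · exact Or.inr ⟨w, by simp, rfl⟩
        · rcases hc w hw with h | ⟨u, hu, h⟩
          · left; omega
          · exact Or.inr ⟨u, by simp [hu], h⟩

theorem srt (m : List ℕ) (hb : ∀ y ∈ m, y < 16) :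
    ∃ m' : List ℕ, Reach (m.map R) (m'.map R) ∧ m'.length = m.length ∧
      (∀ y ∈ m', y < 16) ∧ List.Pairwise (· ≤ ·) (m'.map (· / 4)) := by
  induction m with
  | nil => exact ⟨[], Relation.ReflTransGen.refl, rfl, by simp, by simp⟩
  | cons x m ih =>
    obtain ⟨m1, h1, h2, h3, h4⟩ := ih (fun w hw => hb w (by simp [hw]))
    obtain ⟨m2, g1, g2, g3, g4, -⟩ := ins R hR x (hb x (by simp)) m1 h3 h4
    exact ⟨m2, (Reach.cons h1 (R x)).trans g1, by simp [g2, h2], g3, g4⟩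

theorem five_good (m : List ℕ) (hm : m.length = 5) (hb : ∀ y ∈ m, y < 16) : Good (m.map R) := by
  obtain ⟨m', h1, h2, h3, h4⟩ := srt R hR m hb
  refine Good.of_reach h1 ?_
  have := chk_good R hR _ _ _ chk_true m' (by simp [h2, hm]) h3
    (List.pairwise_cons.2 ⟨fun _ _ => Nat.zero_le _, h4⟩)
  simpa using this

omit hR

theorem step_fn {k : ℕ} (t : Fin k → G) (L : List G) (h : Step (List.ofFn t) L) :
    ∃ t' : Fin k → G, List.ofFn t' = L ∧ IsHurwitzMove t t' := by
  generalize hL : List.ofFn t = L0 at h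
  obtain ⟨p, x, y, q⟩ := h
  have hk : k = p.length + q.length + 2 := by
    have := congrArg List.length hL
    simp at this; omega
  have ht : ∀ j : Fin k, t j = (p ++ x :: y :: q)[(j : ℕ)]'(by have := j.2; simp; omega) := by
    intro j
    simp [← hL]
  have hi : p.length + 1 < k := by omega
  refine ⟨fun j => (p ++ y :: (y⁻¹ * x * y) :: q)[(j : ℕ)]'(by have := j.2; simp; omega), ?_,
    p.length, hi, ?_, ?_, ?_⟩
  · apply List.ext_getElem
    · simp; omega
    · intro n h1 h2
      simp
  · simp [ht]
  · simp [ht]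
  · intro j h1 h2
    simp only [ht]
    simp only [List.getElem_append, List.getElem_cons]
    split_ifs <;> first | rfl | omega

theorem reach_fn {k : ℕ} (t : Fin k → G) (L : List G) (h : Reach (List.ofFn t) L) :
    ∃ s : Fin k → G, List.ofFn s = L ∧ SameHurwitzOrbit t s := by
  induction h with
  | refl => exact ⟨t, rfl, Relation.EqvGen.refl _⟩
  | tail _ h ih =>
    obtain ⟨s, rfl, hs⟩ := ih
    obtain ⟨s', h1, h2⟩ := step_fn s _ h
    exact ⟨s', h1, hs.trans _ _ _ (Relation.EqvGen.rel _ _ h2)⟩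

theorem good_fn {k : ℕ} (t : Fin k → G) (h : Good (List.ofFn t)) :
    ∃ s : Fin k → G, SameHurwitzOrbit t s ∧ HasConsecutiveEqualPair s := by
  obtain ⟨L, h, p, x, q, rfl⟩ := h
  obtain ⟨s, hL, hs⟩ := reach_fn t _ h
  have hk : k = p.length + q.length + 2 := by
    have := congrArg List.length hL
    simp at this; omega
  have ht : ∀ j : Fin k, s j = (p ++ x :: x :: q)[(j : ℕ)]'(by have := j.2; simp; omega) := by
    intro j
    simp [← hL]
  refine ⟨s, hs, p.length, by omega, ?_⟩
  simp [ht]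

end lists

section grp
variable {G : Type*} [Group G] (a b : G)

def X : Fin 4 → G := ![a, b⁻¹ * a * b, b * a * b⁻¹, a * b⁻¹ * a * b * a⁻¹]

def E (z : G) : ℕ → G → G
  | 0, u => u
  | 1, u => z ^ 2 * u⁻¹
  | 2, u => u⁻¹
  | _, u => (z ^ 2)⁻¹ * u

def RR (i : ℕ) : G := E (a * b * a * b) (i / 4 % 4) (X a b (Fin.ofNat 4 i))

end grp
section grp2
variable {G : Type*} [Group G]

theorem sq_inv (a : G) (ha : a ^ 3 = 1) : a⁻¹ = a * a := by
  rw [inv_eq_iff_mul_eq_one, ← ha, pow_succ, pow_two, mul_assoc]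

theorem x3_eq (a b : G) (ha : a ^ 3 = 1) (hb : b ^ 3 = 1) (h : a * b * a * b = b * a * b * a) :
    a * b⁻¹ * a * b * a⁻¹ = (b * a * b * a) ^ 2 * b⁻¹ := by
  have ha' := sq_inv a ha
  have hb' := sq_inv b hb
  have e1 : a * b * a = (b * a * b * a) * b⁻¹ := by rw [← h]; group
  have c1 : b⁻¹ * (b * a * b * a) = (b * a * b * a) * b⁻¹ := by rw [← e1]; group
  have c2 : a * (b * a * b * a) = (b * a * b * a) * a := by
    nth_rewrite 2 [← h]; group
  have hz : b⁻¹ * b⁻¹ = b := by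
    nth_rewrite 1 [hb']; group
  calc a * b⁻¹ * a * b * a⁻¹ = a * b⁻¹ * (a * b * a) * a := by rw [ha']; group
    _ = a * (b⁻¹ * (b * a * b * a)) * b⁻¹ * a := by rw [e1]; group
    _ = (a * (b * a * b * a)) * (b⁻¹ * b⁻¹) * a := by rw [c1]; group
    _ = (b * a * b * a) * (a * b * a) := by rw [c2, hz]; group
    _ = (b * a * b * a) ^ 2 * b⁻¹ := by rw [e1, pow_two]; group

theorem X_conj (a b : G) (ha : a ^ 3 = 1) (hb : b ^ 3 = 1) (h : a * b * a * b = b * a * b * a) :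
    (∀ v w : Fin 4, (X a b w)⁻¹ * X a b v * X a b w = X a b (tb v w)) ∧
    (∀ v : Fin 4, Commute (a * b * a * b) (X a b v)) := by
  have h3 := x3_eq a b ha hb h
  rw [← h] at h3
  have za : Commute (a * b * a * b) a := by
    show a * b * a * b * a = a * (a * b * a * b)
    nth_rewrite 2 [h]; group
  have zb : Commute (a * b * a * b) b := by
    show a * b * a * b * b = b * (a * b * a * b)
    nth_rewrite 1 [h]; group
  have ha2 := sq_inv a ha
  have hb2 := sq_inv b hb
  obtain ⟨x1, hx1⟩ : ∃ x1, x1 = b⁻¹ * a * b := ⟨_, rfl⟩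
  obtain ⟨x2, hx2⟩ : ∃ x2, x2 = b * a * b⁻¹ := ⟨_, rfl⟩
  obtain ⟨x3, hx3⟩ : ∃ x3, x3 = a * b⁻¹ * a * b * a⁻¹ := ⟨_, rfl⟩
  have hX : X a b = ![a, x1, x2, x3] := by rw [hx1, hx2, hx3]; rfl
  -- conjugation by `a`
  have a0 : a⁻¹ * a * a = a := by group
  have a1 : a⁻¹ * x1 * a = x2 := by
    rw [hx1, hx2]
    calc a⁻¹ * (b⁻¹ * a * b) * a = a⁻¹ * b⁻¹ * (a * b * a * b) * b⁻¹ := by group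
      _ = _ := by rw [h]; group
  have a3 : a⁻¹ * x3 * a = x1 := by rw [hx1, hx3]; group
  have a2 : a⁻¹ * x2 * a = x3 := by
    have haa : a * a = a⁻¹ := ha2.symm
    have haa' : a⁻¹ * a⁻¹ = a := by rw [← _root_.mul_inv_rev, haa, inv_inv]
    rw [← a1, hx1, hx3]
    calc a⁻¹ * (a⁻¹ * (b⁻¹ * a * b) * a) * a = (a⁻¹ * a⁻¹) * (b⁻¹ * a * b) * (a * a) := by group
      _ = _ := by rw [haa, haa']; group
  -- conjugation by `b`
  have b0 : b⁻¹ * a * b = x1 := hx1.symm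
  have b0' : b * a * b⁻¹ = x2 := hx2.symm
  have b1' : b * x1 * b⁻¹ = a := by rw [hx1]; group
  have b2 : b⁻¹ * x2 * b = a := by rw [hx2]; group
  have b1 : b⁻¹ * x1 * b = x2 := by
    have hbb : b * b = b⁻¹ := hb2.symm
    have hbb' : b⁻¹ * b⁻¹ = b := by rw [← _root_.mul_inv_rev, hbb, inv_inv]
    rw [hx1, hx2]
    calc b⁻¹ * (b⁻¹ * a * b) * b = (b⁻¹ * b⁻¹) * a * (b * b) := by group
      _ = _ := by rw [hbb, hbb']
  have b2' : b * x2 * b⁻¹ = x1 := by rw [← b1]; group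
  have z1 : Commute (a * b * a * b) x1 := by
    rw [hx1]; exact (zb.inv_right.mul_right za).mul_right zb
  have z2 : Commute (a * b * a * b) x2 := by
    rw [hx2]; exact (zb.mul_right za).mul_right zb.inv_right
  have z3 : Commute (a * b * a * b) x3 := by
    rw [hx3, h3]; exact ((Commute.refl _).pow_right 2).mul_right zb.inv_right
  have b3' : b * x3 * b⁻¹ = x3 := by
    rw [hx3, h3, ← mul_assoc, (zb.pow_left 2).symm.eq]; group
  have b3 : b⁻¹ * x3 * b = x3 := by
    nth_rewrite 1 [← b3']; group
  have k1 : ∀ u, x1⁻¹ * u * x1 = b⁻¹ * (a⁻¹ * (b * u * b⁻¹) * a) * b := by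
    intro u; rw [hx1]; group
  have k2 : ∀ u, x2⁻¹ * u * x2 = b * (a⁻¹ * (b⁻¹ * u * b) * a) * b⁻¹ := by
    intro u; rw [hx2]; group
  have k3 : ∀ u, Commute (a * b * a * b) u → x3⁻¹ * u * x3 = b * u * b⁻¹ := by
    intro u hu
    rw [hx3, h3]
    have := (hu.pow_left 2).eq
    rw [_root_.mul_inv_rev, inv_inv, mul_assoc, mul_assoc, ← mul_assoc u, ← this]; group
  rw [hX]
  constructor
  · intro v w
    fin_cases v <;> fin_cases w <;>
      simp only [tb, Matrix.cons_val, Fin.zero_eta, Fin.mk_one, Fin.reduceFinMk]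
    · exact a0
    · rw [k1, b0', a2, b3]
    · rw [k2, b0, a1, b2']
    · rw [k3 _ za, b0']
    · exact a1
    · rw [k1, b1', a0, b0]
    · rw [k2, b1, a2, b3']
    · rw [k3 _ z1, b1']
    · exact a2
    · rw [k1, b2', a1, b2]
    · rw [k2, b2, a0, b0']
    · rw [k3 _ z2, b2']
    · exact a3
    · rw [k1, b3', a3, b1]
    · rw [k2, b3, a3, b1']
    · rw [k3 _ z3, b3']
  · intro v
    fin_cases v
    exacts [za, z1, z2, z3]

theorem E_conj (z : G) (c : ℕ) (u g : G) (hz : Commute z g) :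
    g⁻¹ * E z c u * g = E z c (g⁻¹ * u * g) := by
  have h2 : g⁻¹ * z ^ 2 = z ^ 2 * g⁻¹ := (hz.inv_right.pow_left 2).eq.symm
  have h3 : g⁻¹ * (z ^ 2)⁻¹ = (z ^ 2)⁻¹ * g⁻¹ := (hz.inv_right.pow_left 2).inv_left.eq.symm
  match c with
  | 0 => rfl
  | 1 => simp only [E]; rw [← mul_assoc, h2]; group
  | 2 => simp only [E]; group
  | (n + 3) => simp only [E]; rw [← mul_assoc, h3]; group

theorem conj_E (z : G) (d : ℕ) (u w : G) (hz : Commute z u) :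
    (E z d w)⁻¹ * u * E z d w = if d = 1 ∨ d = 2 then w * u * w⁻¹ else w⁻¹ * u * w := by
  have h2 : (z ^ 2)⁻¹ * u * z ^ 2 = u := by
    rw [mul_assoc, ← (hz.pow_left 2).eq]; group
  have h3 : z ^ 2 * u * (z ^ 2)⁻¹ = u := by
    rw [(hz.pow_left 2).eq]; group
  match d with
  | 0 => simp [E]
  | 1 =>
    simp only [E, true_or, if_true]
    calc _ = w * ((z ^ 2)⁻¹ * u * z ^ 2) * w⁻¹ := by group
      _ = _ := by rw [h2]
  | 2 => simp [E]
  | (n + 3) =>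
    simp only [E]
    rw [if_neg (by omega)]
    calc _ = w⁻¹ * (z ^ 2 * u * (z ^ 2)⁻¹) * w := by group
      _ = _ := by rw [h3]

theorem tb_inv : ∀ v w : Fin 4, tb (tb w v) w = v := by decide

theorem op_spec0 : ∀ i < 16, ∀ j < 16, op i j / 4 % 4 = i / 4 % 4 ∧
    Fin.ofNat 4 (op i j) = if j / 4 % 4 = 1 ∨ j / 4 % 4 = 2
      then tb (Fin.ofNat 4 j) (Fin.ofNat 4 i) else tb (Fin.ofNat 4 i) (Fin.ofNat 4 j) := by
  decide +kernel

theorem op_spec (i j : ℕ) : op i j / 4 % 4 = i / 4 % 4 ∧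
    Fin.ofNat 4 (op i j) = if j / 4 % 4 = 1 ∨ j / 4 % 4 = 2
      then tb (Fin.ofNat 4 j) (Fin.ofNat 4 i) else tb (Fin.ofNat 4 i) (Fin.ofNat 4 j) := by
  have h := op_spec0 (i % 16) (Nat.mod_lt _ (by norm_num)) (j % 16) (Nat.mod_lt _ (by norm_num))
  have e1 : op (i % 16) (j % 16) = op i j := by
    have e0 : ∀ i, Nat.mod (i % 16) 16 = Nat.mod i 16 := fun i => Nat.mod_mod i 16
    simp only [op, e0]
  have e2 : ∀ i, i % 16 / 4 % 4 = i / 4 % 4 := by intro i; omega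
  have e3 : ∀ i, Fin.ofNat 4 (i % 16) = Fin.ofNat 4 i := by
    intro i; apply Fin.ext; simp [Fin.ofNat]
  rwa [e1, e2, e2, e3, e3] at h

theorem RR_conj (a b : G) (ha : a ^ 3 = 1) (hb : b ^ 3 = 1) (h : a * b * a * b = b * a * b * a)
    (i j : ℕ) : (RR a b j)⁻¹ * RR a b i * RR a b j = RR a b (op i j) := by
  obtain ⟨hX, hz⟩ := X_conj a b ha hb h
  obtain ⟨h1, h2⟩ := op_spec i j
  have hX' : ∀ v w, X a b w * X a b v * (X a b w)⁻¹ = X a b (tb w v) := by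
    intro v w
    have := hX (tb w v) w
    rw [tb_inv] at this
    rw [← this]; group
  have hzR : Commute (a * b * a * b) (RR a b j) := by
    unfold RR
    have := hz (Fin.ofNat 4 j)
    generalize j / 4 % 4 = d
    match d with
    | 0 => exact this
    | 1 => exact ((Commute.refl _).pow_right 2).mul_right this.inv_right
    | 2 => exact this.inv_right
    | (n + 3) => exact ((Commute.refl _).pow_right 2).inv_right.mul_right this
  unfold RR at hzR ⊢
  rw [E_conj _ _ _ _ hzR, conj_E _ _ _ _ (hz _), h1, h2, hX, hX']
  congr 1
  split_ifs <;> rfl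

theorem RR_zero (a b : G) : RR a b 0 = a := rfl

theorem RR_seven (a b : G) (ha : a ^ 3 = 1) (hb : b ^ 3 = 1) (h : a * b * a * b = b * a * b * a) :
    RR a b 7 = b := by
  show (a * b * a * b) ^ 2 * (a * b⁻¹ * a * b * a⁻¹)⁻¹ = b
  rw [x3_eq a b ha hb h, h, _root_.mul_inv_rev, inv_inv]
  have zb : Commute (b * a * b * a) b := by
    show b * a * b * a * b = b * (b * a * b * a)
    nth_rewrite 2 [← h]; group
  rw [← mul_assoc, (zb.pow_left 2).eq]; group

theorem RR_eight (a b : G) : RR a b 8 = a⁻¹ := rfl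

theorem RR_fifteen (a b : G) (ha : a ^ 3 = 1) (hb : b ^ 3 = 1)
    (h : a * b * a * b = b * a * b * a) : RR a b 15 = b⁻¹ := by
  show ((a * b * a * b) ^ 2)⁻¹ * (a * b⁻¹ * a * b * a⁻¹) = b⁻¹
  rw [x3_eq a b ha hb h, h]; group

end grp2

theorem rel_a : ga ^ 3 = 1 := by
  have : PresentedGroup.mk g5Rels (FreeGroup.of 0 ^ 3) = 1 :=
    PresentedGroup.one_of_mem (by simp [g5Rels])
  rw [map_pow] at this
  exact this

theorem rel_b : gb ^ 3 = 1 := by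
  have : PresentedGroup.mk g5Rels (FreeGroup.of 1 ^ 3) = 1 :=
    PresentedGroup.one_of_mem (by simp [g5Rels])
  rw [map_pow] at this
  exact this

theorem rel_ab : ga * gb * ga * gb = gb * ga * gb * ga := by
  have : PresentedGroup.mk g5Rels (FreeGroup.of 0 * FreeGroup.of 1 * FreeGroup.of 0 *
      FreeGroup.of 1 * (FreeGroup.of 1 * FreeGroup.of 0 * FreeGroup.of 1 * FreeGroup.of 0)⁻¹) = 1 :=
    PresentedGroup.one_of_mem (by simp [g5Rels])
  rw [map_mul, map_inv, mul_inv_eq_one] at this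
  simp only [map_mul] at this
  exact this

def rr : ℕ → G5 := RR ga gb

theorem rr_conj (i j : ℕ) : (rr j)⁻¹ * rr i * rr j = rr (op i j) :=
  RR_conj ga gb rel_a rel_b rel_ab i j

theorem op_lt16 (i j : ℕ) : op i j < 16 := Nat.mod_lt _ (by norm_num)

theorem rr0 : rr 0 = ga := rfl
theorem rr8 : rr 8 = ga⁻¹ := rfl
theorem rr7 : rr 7 = gb := RR_seven _ _ rel_a rel_b rel_ab
theorem rr15 : rr 15 = gb⁻¹ := RR_fifteen _ _ rel_a rel_b rel_ab

theorem rr_closed (g : G5) : ∀ i, i < 16 → ∃ j, j < 16 ∧ g * rr i * g⁻¹ = rr j := by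
  have key : ∀ (g : G5) (j : ℕ), rr j = g⁻¹ →
      ∀ i, i < 16 → ∃ j, j < 16 ∧ g * rr i * g⁻¹ = rr j := by
    intro g j hj i _
    refine ⟨op i j, op_lt16 _ _, ?_⟩
    rw [← rr_conj, hj, inv_inv]
  induction g using PresentedGroup.induction_on with
  | _ w =>
  induction w using FreeGroup.induction_on with
  | C1 => intro i hi; exact ⟨i, hi, by simp⟩
  | of x =>
    match x with
    | 0 => exact key ga 8 rr8
    | 1 => exact key gb 15 rr15
  | inv_of x _ =>
    match x with
    | 0 => exact key ga⁻¹ 0 (by rw [inv_inv]; exact rr0)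
    | 1 => exact key gb⁻¹ 7 (by rw [inv_inv]; exact rr7)
  | mul x y hx hy =>
    intro i hi
    obtain ⟨j, hj, e1⟩ := hy i hi
    obtain ⟨k, hk, e2⟩ := hx j hj
    refine ⟨k, hk, ?_⟩
    rw [← e2, ← e1, map_mul]; group

theorem refl_rr (t : G5) (h : IsReflection5 t) : ∃ j, j < 16 ∧ t = rr j := by
  have key : ∀ g i, i < 16 → rr i = g → IsConj g t → ∃ j, j < 16 ∧ t = rr j := by
    rintro g i hi rfl hc
    obtain ⟨c, rfl⟩ := isConj_iff.1 hc
    exact rr_closed c i hi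
  rcases h with h | h | h | h
  · exact key _ 0 (by norm_num) rr0 h
  · exact key _ 7 (by norm_num) rr7 h
  · exact key _ 8 (by norm_num) (by rw [rr8, sq_inv ga rel_a, pow_two]) h
  · exact key _ 15 (by norm_num) (by rw [rr15, sq_inv gb rel_b, pow_two]) h

end G5Pair
theorem g5_pair_lemma (k : ℕ) (hk : 5 ≤ k) (c : G5) (hc : IsCoxeter5 c)
    (t : Fin k → G5) (ht : ∀ i, IsReflection5 (t i)) (hp : (List.ofFn t).prod = c) :
    ∃ s : Fin k → G5, SameHurwitzOrbit t s ∧ HasConsecutiveEqualPair s := by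
  have hR := fun i => G5Pair.refl_rr (t i) (ht i)
  choose f hf1 hf2 using hR
  have hL : List.ofFn t = (List.ofFn f).map G5Pair.rr := by
    rw [List.map_ofFn]
    congr 1
    funext i
    exact hf2 i
  apply G5Pair.good_fn
  rw [hL, ← List.take_append_drop 5 (List.ofFn f), List.map_append]
  apply G5Pair.Good.app
  apply G5Pair.five_good G5Pair.rr G5Pair.rr_conj
  · simpa using hk
  · intro y hy
    obtain ⟨i, rfl⟩ := List.mem_ofFn.1 (List.mem_of_mem_take hy)
    exact hf1 i
end
end

section
/- Let c be a Coxeter element of G5 and let k ≤ 4. Two reflection factorizations (t₁,…,t_k) and (t′₁,…,t′_k) of c lie in the same Hurwitz orbit if and only if they have the same multiset of conjugacy classes. -/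
noncomputable section

open Matrix Complex

namespace G5aux

/-! ### Relations in the presented group -/

def gz : G5 := ga * gb * ga * gb

theorem ga3 : ga ^ 3 = 1 := by
  have : (PresentedGroup.mk g5Rels) (FreeGroup.of 0 ^ 3) = 1 :=
    PresentedGroup.one_of_mem (by simp [g5Rels])
  simpa [ga, PresentedGroup.of] using this

theorem gb3 : gb ^ 3 = 1 := by
  have : (PresentedGroup.mk g5Rels) (FreeGroup.of 1 ^ 3) = 1 :=
    PresentedGroup.one_of_mem (by simp [g5Rels])
  simpa [gb, PresentedGroup.of] using this

theorem gbraid : ga * gb * ga * gb = gb * ga * gb * ga := by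
  have : (PresentedGroup.mk g5Rels) (FreeGroup.of 0 * FreeGroup.of 1 * FreeGroup.of 0 *
      FreeGroup.of 1 * (FreeGroup.of 1 * FreeGroup.of 0 * FreeGroup.of 1 * FreeGroup.of 0)⁻¹)
      = 1 := PresentedGroup.one_of_mem (by simp [g5Rels])
  rw [map_mul, map_inv, mul_inv_eq_one] at this
  simpa [ga, gb, PresentedGroup.of] using this

section abstractrel
variable {G : Type*} [Group G] {a b z : G}

theorem rel_bab (hz : z = a * b * a * b) : b * a * b = a⁻¹ * z := by
  rw [hz]; group

theorem rel_za (hz : z = a * b * a * b) (h : a * b * a * b = b * a * b * a) :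
    z * a = a * z := by
  have : a * z = a * (b * a * b * a) := by rw [hz, h]
  rw [this, hz]; group

theorem rel_zb (hz : z = a * b * a * b) (h : a * b * a * b = b * a * b * a) :
    z * b = b * z := by
  have : z * b = (b * a * b * a) * b := by rw [hz, h]
  rw [this, hz]; group

theorem rel_b2 (hb : b ^ 3 = 1) (hz : z = a * b * a * b) : z * (b * b) = a * b * a := by
  have hb' : b * b * b = 1 := by rw [← hb, pow_three']
  calc z * (b * b) = a * b * a * (b * b * b) := by rw [hz]; group
    _ = _ := by rw [hb', mul_one]

theorem rel_z6 (ha : a ^ 3 = 1) (hb : b ^ 3 = 1) (hz : z = a * b * a * b)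
    (h : a * b * a * b = b * a * b * a) : z ^ 6 = 1 := by
  have hza : Commute z a := rel_za hz h
  have hzb : Commute z b := rel_zb hz h
  have ha' : a * a = a⁻¹ := by
    rw [eq_inv_iff_mul_eq_one, ← ha, pow_three']
  have hb' : b * b = b⁻¹ := by
    rw [eq_inv_iff_mul_eq_one, ← hb, pow_three']
  obtain ⟨x, hx⟩ : ∃ x, x = a * b := ⟨_, rfl⟩
  obtain ⟨y, hy⟩ : ∃ y, y = b * a := ⟨_, rfl⟩
  obtain ⟨w, hw⟩ : ∃ w, w = a⁻¹ * b * a⁻¹ := ⟨_, rfl⟩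
  have hzx : Commute z x := by rw [hx]; exact hza.mul_right hzb
  have hzy : Commute z y := by rw [hy]; exact hzb.mul_right hza
  have hxx : x * x = z := by rw [hx, hz]; group
  have hyy : y * y = z := by rw [hy, hz, h]; group
  have hww : w * w = z := by
    have e1 : w = a⁻¹ * y * a := by
      rw [hw, hy, ← ha']; group
    calc w * w = a⁻¹ * (y * y) * a := by rw [e1]; group
      _ = z := by rw [hyy, mul_assoc, hza.eq]; group
  have hxy : x * y = w⁻¹ := by
    calc x * y = a * (b * b) * a := by rw [hx, hy]; group
      _ = w⁻¹ := by rw [hb', hw]; group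
  -- `x y x y = z⁻¹`
  have h1 : (x * y) * (x * y) = z⁻¹ := by rw [hxy, ← hww]; group
  have h2 : z * (x * y) * (x * y) = 1 := by rw [mul_assoc, h1]; group
  -- `y x = z⁻³ x y`
  have h3 : y * x * z ^ 3 = x * y := by
    have : x * (y * x) * y = z⁻¹ := by rw [← h1]; group
    have e : y * x = x⁻¹ * z⁻¹ * y⁻¹ := by rw [← this]; group
    have ex : x⁻¹ * z = x := by rw [← hxx]; group
    have ey : y⁻¹ * z = y := by rw [← hyy]; group
    calc y * x * z ^ 3 = x⁻¹ * z⁻¹ * y⁻¹ * z ^ 3 := by rw [e]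
      _ = x⁻¹ * z⁻¹ * (y⁻¹ * z) * z ^ 2 := by group
      _ = x⁻¹ * z⁻¹ * (y * z ^ 2) := by rw [ey]; group
      _ = x⁻¹ * z⁻¹ * (z ^ 2 * y) := by rw [(hzy.pow_left 2).eq]
      _ = x⁻¹ * z * y := by group
      _ = _ := by rw [ex]
  have h4 : y * z * z ^ 6 = z * y := by
    calc y * z * z ^ 6 = (y * x) * x * z ^ 3 * z ^ 3 := by rw [← hxx]; group
      _ = (y * x) * (x * z ^ 3) * z ^ 3 := by group
      _ = (y * x) * (z ^ 3 * x) * z ^ 3 := by rw [(hzx.pow_left 3).eq]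
      _ = (y * x * z ^ 3) * x * z ^ 3 := by group
      _ = x * y * x * z ^ 3 := by rw [h3]
      _ = x * (y * x * z ^ 3) := by group
      _ = x * x * y := by rw [h3]; group
      _ = z * y := by rw [hxx]
  rw [hzy.eq] at h4
  exact mul_eq_left.mp h4

theorem rel_ba2b (ha : a ^ 3 = 1) (hb : b ^ 3 = 1) (hz : z = a * b * a * b)
    (h : a * b * a * b = b * a * b * a) :
    b * (a * a * b) = z ^ 2 * (a * a * b * (a * a)) := by
  have hza : Commute z a := rel_za hz h
  have hzb : Commute z b := rel_zb hz h
  have h6 := rel_z6 ha hb hz h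
  have ha' : a * a * a = 1 := by rw [← ha, pow_three']
  have hb2 := rel_b2 hb hz
  have e0 : b * a * b = a⁻¹ * z := rel_bab hz
  have e1 : z * (a * a) = b * a * b := by
    rw [e0, ← hza.inv_right.eq]
    congr 1
    rw [eq_inv_iff_mul_eq_one, ha']
  have e2 : z ^ 4 * (b * (a * a * b)) = a * a * b * (a * a) := by
    calc z ^ 4 * (b * (a * a * b)) = z ^ 3 * (z * b) * (a * a) * b := by group
      _ = z ^ 3 * b * (z * (a * a)) * b := by rw [hzb.eq]; group
      _ = z * (z * (z * (b * b)) * a) * (b * b) := by rw [e1, pow_three']; group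
      _ = z * (z * (a * b * a * a)) * (b * b) := by rw [hb2]; group
      _ = z * ((a * b * a * a) * (z * (b * b))) := by
          have : Commute z (a * b * a * a) :=
            ((hza.mul_right hzb).mul_right hza).mul_right hza
          rw [this.eq]; group
      _ = z * (a * b * (a * a * a) * b * a) := by rw [hb2]; group
      _ = (z * a) * (b * b) * a := by rw [ha']; group
      _ = a * (z * (b * b)) * a := by rw [hza.eq]; group
      _ = _ := by rw [hb2]; group
  calc b * (a * a * b) = z ^ 6 * (b * (a * a * b)) := by rw [h6, one_mul]
    _ = z ^ 2 * (z ^ 4 * (b * (a * a * b))) := by group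
    _ = _ := by rw [e2]

end abstractrel

/-! ### Normal forms and the regular permutation representation -/

abbrev C := Fin 6 × Fin 12

def wd {G : Type*} [Group G] (a b : G) : Fin 12 → G :=
  ![1, a, a * a, b, b * a, b * (a * a), a * b, a * b * a, a * b * (a * a),
    a * a * b, a * a * b * a, a * a * b * (a * a)]

def pa : Fin 12 → Fin 12 := ![1, 2, 0, 6, 7, 8, 9, 10, 11, 3, 4, 5]
def pb : Fin 12 → Fin 12 := ![3, 4, 5, 7, 8, 6, 2, 0, 1, 11, 9, 10]
def eb : Fin 12 → Fin 6 := ![0, 0, 0, 5, 5, 5, 1, 1, 1, 2, 2, 2]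

def la (c : C) : C := (c.1, pa c.2)
def lb (c : C) : C := (c.1 + eb c.2, pb c.2)

def PA : Equiv.Perm C where
  toFun := la
  invFun := fun c => la (la c)
  left_inv := by unfold Function.LeftInverse; decide +kernel
  right_inv := by unfold Function.RightInverse Function.LeftInverse; decide +kernel

def PB : Equiv.Perm C where
  toFun := lb
  invFun := fun c => lb (lb c)
  left_inv := by unfold Function.LeftInverse; decide +kernel
  right_inv := by unfold Function.RightInverse Function.LeftInverse; decide +kernel

def nf {G : Type*} [Group G] (a b z : G) (c : C) : G := z ^ (c.1 : ℕ) * wd a b c.2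

theorem wd_a {G : Type*} [Group G] {a b : G} (ha : a ^ 3 = 1) (j : Fin 12) :
    a * wd a b j = wd a b (pa j) := by
  have ha' : a * (a * a) = 1 := by rw [← ha, pow_three]
  have ha2 : ∀ x, a * (a * (a * x)) = x := fun x => by
    have := congrArg (· * x) ha'
    simpa only [mul_assoc, one_mul] using this
  fin_cases j <;> simp [wd, pa, mul_assoc, ha', ha2]

theorem wd_b {G : Type*} [Group G] {a b z : G} (ha : a ^ 3 = 1) (hb : b ^ 3 = 1)
    (hz : z = a * b * a * b) (h : a * b * a * b = b * a * b * a) (j : Fin 12) :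
    b * wd a b j = z ^ (eb j : ℕ) * wd a b (pb j) := by
  have ha' : a * (a * a) = 1 := by rw [← ha, pow_three]
  have ha2 : ∀ x, a * (a * (a * x)) = x := fun x => by
    have := congrArg (· * x) ha'
    simpa only [mul_assoc, one_mul] using this
  have h6 := rel_z6 ha hb hz h
  have k1 : b * b = z ^ 5 * (a * b * a) := by
    rw [← rel_b2 hb hz, ← mul_assoc, ← pow_succ, h6, one_mul]
  have k2 : b * (a * b) = z * (a * a) := by
    have hza : Commute z a := rel_za hz h
    rw [← mul_assoc, rel_bab hz, ← hza.inv_right.eq]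
    congr 1
    rw [inv_eq_iff_mul_eq_one, ha']
  have k3 := rel_ba2b ha hb hz h
  have k1' : ∀ x, b * (b * x) = z ^ 5 * (a * (b * (a * x))) := fun x => by
    rw [← mul_assoc, k1]; simp only [mul_assoc]
  have k2' : ∀ x, b * (a * (b * x)) = z * (a * (a * x)) := fun x => by
    rw [← mul_assoc a, ← mul_assoc, k2]; simp only [mul_assoc]
  have k3' : ∀ x, b * (a * (a * (b * x))) = z ^ 2 * (a * (a * (b * (a * (a * x))))) := fun x => by
    have := congrArg (· * x) k3
    simpa only [mul_assoc] using this
  simp only [mul_assoc] at k1 k2 k3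
  fin_cases j <;> simp [wd, pb, eb, mul_assoc, ha', k1, k2, k3, k1', k2', k3']

def phi : G5 →* Equiv.Perm C :=
  PresentedGroup.toGroup (f := ![PA, PB]) (by
    have h1 : PA ^ 3 = 1 := by ext1 c; revert c; decide +kernel
    have h2 : PB ^ 3 = 1 := by ext1 c; revert c; decide +kernel
    have h3 : PA * PB * PA * PB = PB * PA * PB * PA := by ext1 c; revert c; decide +kernel
    intro r hr
    simp only [g5Rels, Set.mem_insert_iff, Set.mem_singleton_iff] at hr
    rcases hr with rfl | rfl | rfl
    · simpa using h1
    · simpa using h2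
    · rw [map_mul, map_inv, mul_inv_eq_one]; simpa using h3)

theorem phi_a : phi ga = PA := by simp [phi, ga]
theorem phi_b : phi gb = PB := by simp [phi, gb]

def f (c : C) : G5 := nf ga gb gz c

theorem f_la (c : C) : f (la c) = ga * f c := by
  have hza : Commute gz ga := rel_za rfl gbraid
  simp only [f, nf, la]
  rw [← wd_a ga3, ← mul_assoc, ← mul_assoc, (hza.pow_left _).eq]

theorem f_lb (c : C) : f (lb c) = gb * f c := by
  have hzb : Commute gz gb := rel_zb rfl gbraid
  have h6 : gz ^ 6 = 1 := rel_z6 ga3 gb3 rfl gbraid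
  simp only [f, nf, lb]
  rw [← mul_assoc, ← (hzb.pow_left _).eq, mul_assoc, wd_b ga3 gb3 rfl gbraid, Fin.val_add,
    ← pow_eq_pow_mod _ h6, pow_add, mul_assoc]
  rfl

theorem f_phi (g : G5) : ∀ c, f (phi g c) = g * f c := by
  induction g using PresentedGroup.induction_on with
  | _ w =>
    induction w using FreeGroup.induction_on with
    | C1 => intro c; simp
    | of i =>
      intro c
      fin_cases i
      · have := f_la c
        have e : phi (PresentedGroup.mk g5Rels (FreeGroup.of 0)) = PA := phi_a
        simp only [Fin.zero_eta]
        rw [e]; exact this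
      · have := f_lb c
        have e : phi (PresentedGroup.mk g5Rels (FreeGroup.of 1)) = PB := phi_b
        simp only [Fin.mk_one]
        rw [e]; exact this
    | inv_of i ih =>
      intro c
      have := ih (phi (PresentedGroup.mk g5Rels (FreeGroup.of i))⁻¹ c)
      rw [← Equiv.Perm.mul_apply, ← map_mul, mul_inv_cancel, map_one, Equiv.Perm.one_apply] at this
      rw [map_inv, this, inv_mul_cancel_left]
    | mul x y hx hy =>
      intro c
      rw [map_mul, map_mul, Equiv.Perm.mul_apply, hx, hy, mul_assoc]

theorem f_zero : f (0, 0) = 1 := by simp [f, nf, wd]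

theorem f_code (g : G5) : f (phi g (0, 0)) = g := by rw [f_phi, f_zero, mul_one]

theorem code_inj {g h : G5} (e : phi g (0, 0) = phi h (0, 0)) : g = h := by
  rw [← f_code g, e, f_code]

def P (c : C) : Equiv.Perm C := nf PA PB (PA * PB * PA * PB) c

theorem phi_f (c : C) : phi (f c) = P c := by
  obtain ⟨e, j⟩ := c
  have h : phi (wd ga gb j) = wd PA PB j := by
    fin_cases j <;> simp [wd, phi_a, phi_b]
  simp [f, P, nf, h, gz, phi_a, phi_b]

theorem P_zero (c : C) : P c (0, 0) = c := by
  revert c; decide +kernel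

theorem f_mul (c d : C) : f c * f d = f (P c d) := by
  rw [← phi_f, f_phi]

theorem f_inj {c d : C} (h : f c = f d) : c = d := by
  rw [← P_zero c, ← P_zero d, ← phi_f, ← phi_f, h]

theorem f_surj (g : G5) : ∃ c, f c = g := ⟨_, f_code g⟩


/-! ### Tables -/

def el (n : ℕ) : C := (Fin.ofNat 6 (n / 12), Fin.ofNat 12 (n % 12))
def ge (n : ℕ) : G5 := f (el n)

def rc (l : ℕ) : ℕ := (0x454341311a0a08033a38330215131101 >>> (8 * l)) % 256
def r (l : ℕ) : G5 := ge (rc l)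

def tT (p l : ℕ) : ℕ := (0x3d29072d16023314321b44460d411f4528063c2f153513011d433145401e0c47083e272e1712003442301c47200e3f463c2f042a13013911312141430c471c422e033e2c123b100023403042461b0e44053d2d2b140f023a3f3222441d0d45433e2c0a2710003617301e47400e44223f2b093d290f3816022046323f43210d410b3c2a281115013745311f41230c424036343b240d4341452b292d3d06040b3c333a38260c404742282f2a3c030a083e393735250e46443f2e2c273e0907053d311d43210a3e2708260f383a013513391c4230230929073d113725393412003b44321b220b063c283624103b1402333a3023401e073d2d0525153537003b1036223f3220062f043c173424363a0f02384131211f08033e2e33261638110139373220461b043c2a0b24123b34023816331f45311d032c0a3e143a26333715013547301e1c05093d2b39251335170036342a282f18013735391f1d213142404730272e2c1a00343b361c231e303f4644322d2b2919023a383322201b32454341312511371546321b441a032c2e3d29072d10362417451d4331052b192d28063c2f38260f164742301c2a18042f083e272e24173412433121411909292b3c2f042a16332614422340300b28182a2e033e2c35251513443f3222271a0a2c053d2d2b26143a0f40301e4718062f283e2c0a27133925113f204632082e1a272b093d293b2412104145311f2d1907290b3c2a281e1c230c3d2b292d1311152536343b241b22200e3c282f2a10171224333a3826211f1d0d3e2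e2c2716140f263937352519052b093a260f380e3f2022311d4321042a180b39113725411f0d211c4230232c1a030a3b3624101e0c402344321b22180b2806372515350d451d1f3023401e0a271a0836173424471c0c1e223f322029190907383326161b0e46204131211f1a082e033424123b0c42231c3220461b072d190533143a2644220e1b1f45311d2f18060435392513210d431d47301e1c12101700311f1d21070509192a282f180f161402301c231e040b0618272e2c1a151311013222201b0a08031a2d2b29190d411f452e1a032c0233141625113715401e0c472d052b193513011510362417200e3f462f2a18041200341738260f160c471c422b1909290139111324173412461b0e442a0b28183b100012163326141d0d45432c271a0a0f023a14352515130e44223f2818062f0036171026143a0f43210d4127082e1a3816020f13392511230c4240292d1907150137113b24121006040b3c251311154341450d1e1c230c030a083e241017124047420c1b22200e0907053d2616140f46443f0e211f1d0d01351339220e3f203e27080a19052b093412003b21411f0d29073d09042a180b1402333a231e0c40063c280b2c1a030a003b10361f0d451d3d2d0507180b28063a0f02381e471c0c2f043c060a271a0811013937201b0e46033e2e0829190907023816331c0c42233c2a0b041a082e03371501351b44220e2c0a3e03072d1905170036341d210d43093d2b052f180604424047301907050937353901121017003f46443218040b06343b36000f161402454341311a0a08033a38330215131101 >>> (8 * (16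 * p + l))) % 256
def cj (i j : ℕ) : ℕ := (0xfdcedefcefcdfdcecefdfcdecdefcefdecdfedcfdcfeecdfdfeccfedfedcdfeca98bb98a98aba98b8ba98ab9ab988ba99ab8a89b89ba9ab8b89a9ba8ba89b89a54765746746554766745756456476745456764754756456776544657657476543102123023013102023130120123023120132103103220131320032132101320 >>> (4 * (16 * i + j))) % 16

theorem cj_lt (i j : ℕ) : cj i j < 16 := Nat.mod_lt _ (by norm_num)

theorem el_inj : ∀ p < 72, ∀ q < 72, el p = el q → p = q := by
  intro p hp q hq h
  simp only [el, Prod.mk.injEq, Fin.ext_iff, Fin.val_ofNat] at h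
  omega

theorem ge_inj {p q : ℕ} (hp : p < 72) (hq : q < 72) (h : ge p = ge q) : p = q :=
  el_inj p hp q hq (f_inj h)

theorem tT_spec0 : ∀ p < 72, ∀ l < 16, tT p l < 72 ∧ P (el p) (el (rc l)) = el (tT p l) := by
  decide +kernel

theorem tT_spec {p l : ℕ} (hp : p < 72) (hl : l < 16) :
    tT p l < 72 ∧ ge p * r l = ge (tT p l) := by
  obtain ⟨h1, h2⟩ := tT_spec0 p hp l hl
  exact ⟨h1, by rw [ge, r, ge, f_mul, h2, ge]⟩

theorem rc_lt : ∀ l < 16, rc l < 72 := by decide +kernel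

theorem cj_spec0 : ∀ i < 16, ∀ j < 16,
    P (el (rc j)) (el (rc (cj i j))) = P (el (rc i)) (el (rc j)) := by decide +kernel

theorem cj_spec {i j : ℕ} (hi : i < 16) (hj : j < 16) : r (cj i j) = (r j)⁻¹ * r i * r j := by
  rw [mul_assoc, eq_inv_mul_iff_mul_eq]
  simp only [r, ge, f_mul, cj_spec0 i hi j hj]

theorem refl_spec0 : ∀ x : C, ∀ y ∈ [((0, 1) : C), (0, 2), (0, 3), (5, 7)],
    ∃ l < 16, P x y = P (el (rc l)) x := by decide +kernel

theorem refl_spec1 {y : C} (hy : y ∈ [((0, 1) : C), (0, 2), (0, 3), (5, 7)]) {t : G5}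
    (h : IsConj (f y) t) : ∃ l < 16, t = r l := by
  obtain ⟨g, hg⟩ := isConj_iff.mp h
  obtain ⟨x, rfl⟩ := f_surj g
  obtain ⟨l, hl, e⟩ := refl_spec0 x y hy
  refine ⟨l, hl, ?_⟩
  rw [← hg, mul_inv_eq_iff_eq_mul, f_mul, e, r, ge, f_mul]

theorem refl_spec {t : G5} (h : IsReflection5 t) : ∃ l < 16, t = r l := by
  have e1 : f (0, 1) = ga := by simp [f, nf, wd]
  have e2 : f (0, 2) = ga ^ 2 := by simp [f, nf, wd, pow_two]
  have e3 : f (0, 3) = gb := by simp [f, nf, wd]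
  have e4 : f (5, 7) = gb ^ 2 := by
    rw [← e3, pow_two, f_mul]; congr 1
  rcases h with h | h | h | h
  · exact refl_spec1 (y := (0, 1)) (by simp) (by rw [e1]; exact h)
  · exact refl_spec1 (y := (0, 3)) (by simp) (by rw [e3]; exact h)
  · exact refl_spec1 (y := (0, 2)) (by simp) (by rw [e2]; exact h)
  · exact refl_spec1 (y := (5, 7)) (by simp) (by rw [e4]; exact h)

def chi : G5 →* Multiplicative (ZMod 3) :=
  PresentedGroup.toGroup (f := ![1, Multiplicative.ofAdd 1]) (by
    intro r hr
    simp only [g5Rels, Set.mem_insert_iff, Set.mem_singleton_iff] at hr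
    rcases hr with rfl | rfl | rfl
    · simp
    · simp only [map_pow, FreeGroup.lift_apply_of]; decide +kernel
    · rw [map_mul, map_inv, mul_inv_eq_one]; simp)

theorem chi_f (c : C) : chi (f c) = nf 1 (Multiplicative.ofAdd 1)
    (1 * Multiplicative.ofAdd 1 * 1 * Multiplicative.ofAdd 1) c := by
  obtain ⟨e, j⟩ := c
  have ha : chi ga = 1 := by simp [chi, ga]
  have hb : chi gb = Multiplicative.ofAdd 1 := by simp [chi, gb]
  have h : chi (wd ga gb j) = wd 1 (Multiplicative.ofAdd 1) j := by
    fin_cases j <;> simp [wd, ha, hb]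
  simp [f, nf, h, gz, ha, hb]

theorem chi_r0 : ∀ l < 16, (nf 1 (Multiplicative.ofAdd (1 : ZMod 3))
    (1 * Multiplicative.ofAdd 1 * 1 * Multiplicative.ofAdd 1) (el (rc l)) = 1 ↔ l / 8 = 0) := by
  decide +kernel

theorem type_conj {l l' : ℕ} (hl : l < 16) (hl' : l' < 16) (h : IsConj (r l) (r l')) :
    l / 8 = l' / 8 := by
  have e : chi (r l) = chi (r l') := isConj_iff_eq.mp (chi.map_isConj h)
  have h1 := chi_r0 l hl
  have h2 := chi_r0 l' hl'
  rw [← chi_f] at h1 h2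
  rw [r, r, ge, ge] at e
  rw [e] at h1
  have := h1.symm.trans h2
  omega

theorem cox_spec0 : ∀ c : C, (P c ^ 6) (0, 0) ≠ (0, 0) → (P c ^ 4) (0, 0) ≠ (0, 0) →
    ∃ x : C, P x c = P (el 4) x ∨ P x c = P (el 28) x := by decide +kernel

theorem cox_spec {c : G5} (h : orderOf c = 12) :
    ∃ x : G5, x * c * x⁻¹ = ge 4 ∨ x * c * x⁻¹ = ge 28 := by
  obtain ⟨d, rfl⟩ := f_surj c
  have key : ∀ n, 0 < n → n < 12 → (P d ^ n) (0, 0) ≠ (0, 0) := by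
    intro n h0 h1 e
    refine pow_ne_one_of_lt_orderOf (x := f d) h0.ne' (by omega) (code_inj ?_)
    rw [map_pow, phi_f, e, map_one]; rfl
  obtain ⟨x, hx⟩ := cox_spec0 d (key 6 (by norm_num) (by norm_num))
    (key 4 (by norm_num) (by norm_num))
  refine ⟨f x, hx.imp ?_ ?_⟩ <;>
  · intro e
    rw [mul_inv_eq_iff_eq_mul, f_mul, e, ge, f_mul]

/-! ### Encoded tuples -/

def dec (k x : ℕ) : Fin k → G5 := fun j => r (x / 16 ^ (j : ℕ) % 16)

def mv (i x : ℕ) : ℕ :=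
  x % 16 ^ i + 16 ^ i * (x / 16 ^ i / 16 % 16 + 16 * cj (x / 16 ^ i % 16) (x / 16 ^ i / 16 % 16)
    + 256 * (x / 16 ^ i / 256))

theorem mv_spec {k i : ℕ} (hk : k ≤ 4) (hi : i + 1 < k) (x : ℕ) :
    IsHurwitzMove (dec k x) (dec k (mv i x)) := by
  have hi' : i < 3 := by omega
  have hc := cj_lt (x / 16 ^ i % 16) (x / 16 ^ i / 16 % 16)
  have d0 : mv i x / 16 ^ i % 16 = x / 16 ^ (i + 1) % 16 := by
    unfold mv
    generalize cj (x / 16 ^ i % 16) (x / 16 ^ i / 16 % 16) = y at *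
    interval_cases i <;> norm_num <;> omega
  have d1 : mv i x / 16 ^ (i + 1) % 16 = cj (x / 16 ^ i % 16) (x / 16 ^ (i + 1) % 16) := by
    rw [pow_succ, ← Nat.div_div_eq_div_mul, ← Nat.div_div_eq_div_mul]
    unfold mv
    generalize cj (x / 16 ^ i % 16) (x / 16 ^ i / 16 % 16) = y at *
    interval_cases i <;> norm_num <;> omega
  have d2 : ∀ j, j < 4 → j ≠ i → j ≠ i + 1 → mv i x / 16 ^ j % 16 = x / 16 ^ j % 16 := by
    clear d0 d1
    intro j hj h1 h2
    rcases Nat.lt_or_ge j i with h3 | h3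
    · unfold mv
      generalize cj (x / 16 ^ i % 16) (x / 16 ^ i / 16 % 16) = y at *
      interval_cases i <;> interval_cases j <;> omega
    · have e : mv i x / 16 ^ (i + 2) = x / 16 ^ (i + 2) := by
        rw [pow_add, ← Nat.div_div_eq_div_mul, ← Nat.div_div_eq_div_mul]
        unfold mv
        generalize cj (x / 16 ^ i % 16) (x / 16 ^ i / 16 % 16) = y at *
        clear h1 h2 h3 hj
        interval_cases i <;> norm_num <;> omega
      obtain ⟨m, rfl⟩ : ∃ m, j = i + 2 + m := ⟨j - (i + 2), by omega⟩
      rw [pow_add, ← Nat.div_div_eq_div_mul, ← Nat.div_div_eq_div_mul, e]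
  refine ⟨i, hi, ?_, ?_, ?_⟩
  · simp only [dec, d0]
  · simp only [dec, d1]
    exact cj_spec (Nat.mod_lt _ (by norm_num)) (Nat.mod_lt _ (by norm_num))
  · intro j h1 h2
    simp only [dec, d2 j (by omega) h1 h2]

/-- Forces kernel evaluation of the argument. -/
def force {α : Type} (n : ℕ) (g : ℕ → α) : α :=
  Nat.rec (g 0) (fun m _ => g (Nat.succ m)) n

theorem force_eq {α : Type} (n : ℕ) (g : ℕ → α) : force n g = g n := by
  cases n <;> rfl

def nb (k x : ℕ) : List ℕ := (List.range (k - 1)).map fun i => mv i x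

def clo (k : ℕ) : ℕ → List ℕ → ℕ → ℕ
  | 0, _, m => m
  | _ + 1, [], m => m
  | n + 1, x :: xs, m =>
    force x fun x => force m fun m =>
      bif m.testBit x then clo k n xs m else clo k n (nb k x ++ xs) (m ||| (1 <<< x))

theorem clo_spec {k : ℕ} (hk : k ≤ 4) (s : ℕ) (n : ℕ) : ∀ (xs : List ℕ) (m : ℕ),
    (∀ x ∈ xs, SameHurwitzOrbit (dec k s) (dec k x)) →
    (∀ x, m.testBit x = true → SameHurwitzOrbit (dec k s) (dec k x)) →
    ∀ x, (clo k n xs m).testBit x = true → SameHurwitzOrbit (dec k s) (dec k x) := by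
  induction n with
  | zero => intro xs m _ h2; simpa [clo] using h2
  | succ n ih =>
    intro xs m h1 h2
    cases xs with
    | nil => simpa [clo] using h2
    | cons y ys =>
      simp only [clo, force_eq]
      cases hb : m.testBit y with
      | true =>
        simp only [cond_true]
        exact ih ys m (fun x hx => h1 x (List.mem_cons_of_mem _ hx)) h2
      | false =>
        simp only [cond_false]
        refine ih _ _ ?_ ?_
        · intro x hx
          rcases List.mem_append.mp hx with hx | hx
          · simp only [nb, List.mem_map, List.mem_range] at hx
            obtain ⟨i, hi, rfl⟩ := hx
            exact (h1 y (List.mem_cons_self)).trans _ _ _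
              (Relation.EqvGen.rel _ _ (mv_spec hk (by omega) y))
          · exact h1 x (List.mem_cons_of_mem _ hx)
        · intro x hx
          rw [Nat.testBit_or, Bool.or_eq_true] at hx
          rcases hx with hx | hx
          · exact h2 x hx
          · rw [Nat.one_shiftLeft, Nat.testBit_two_pow] at hx
            have : y = x := by simpa using hx
            rw [← this]
            exact h1 y (List.mem_cons_self)

def pick (m1 m2 m3 : ℕ) : ℕ → ℕ
  | 1 => m1
  | 2 => m2
  | 3 => m3
  | _ => 0

def lL (L p : ℕ) : ℕ := (L >>> (8 * p)) % 256

def chk (L m1 m2 m3 : ℕ) : ℕ → ℕ → ℕ → ℕ → ℕ → Bool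
  | 0, mult, x, p, cnt =>
    force (lL L p) fun l =>
      bif Nat.blt l 16 then (pick m1 m2 m3 (cnt + l / 8)).testBit (x + mult * l) else true
  | n + 1, mult, x, p, cnt =>
    [0, 1, 2, 3, 4, 5, 6, 7, 8, 9, 10, 11, 12, 13, 14, 15].all fun l =>
      force (16 * mult) fun mult' => force (x + mult * l) fun x' =>
      force (tT p l) fun p' => force (cnt + l / 8) fun cnt' => chk L m1 m2 m3 n mult' x' p' cnt'

def encL : List ℕ → ℕ
  | [] => 0
  | d :: l => d + 16 * encL l

theorem encL_digit (l : List ℕ) (h : ∀ d ∈ l, d < 16) : ∀ (j : ℕ) (hj : j < l.length),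
    encL l / 16 ^ j % 16 = l[j] := by
  induction l with
  | nil => intro j hj; simp at hj
  | cons d l ih =>
    have hd := h d (List.mem_cons_self)
    intro j hj
    cases j with
    | zero => simp only [encL, pow_zero, List.getElem_cons_zero]; omega
    | succ j =>
      rw [List.getElem_cons_succ, ← ih (fun d hd => h d (List.mem_cons_of_mem _ hd)) j
        (by simpa using hj), pow_succ', ← Nat.div_div_eq_div_mul]
      have : encL (d :: l) / 16 = encL l := by simp only [encL]; omega
      rw [this]

theorem chk_spec (L m1 m2 m3 c : ℕ) (hc : c < 72)
    (hL : ∀ p < 72, ∀ l < 16, tT p l = c → lL L p = l) (n : ℕ) :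
    ∀ (mult x p cnt : ℕ) (l : List ℕ), p < 72 → l.length = n + 1 → (∀ d ∈ l, d < 16) →
    chk L m1 m2 m3 n mult x p cnt = true → ge p * (l.map r).prod = ge c →
    (pick m1 m2 m3 (cnt + (l.map (· / 8)).sum)).testBit (x + mult * encL l) = true := by
  induction n with
  | zero =>
    intro mult x p cnt l hp hlen hd hchk hprod
    obtain ⟨d, rfl⟩ := List.length_eq_one_iff.mp hlen
    have hd := hd d (by simp)
    obtain ⟨h1, h2⟩ := tT_spec hp hd
    have e : tT p d = c := by
      refine ge_inj h1 hc ?_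
      rw [← h2, ← hprod]; simp
    have := hL p hp d hd e
    have hb : Nat.blt d 16 = true := by rw [Nat.blt_eq]; exact hd
    simp only [chk, force_eq, this, hb, cond_true] at hchk
    simpa [encL] using hchk
  | succ n ih =>
    intro mult x p cnt l hp hlen hd hchk hprod
    cases l with
    | nil => simp at hlen
    | cons d l =>
      have hd0 := hd d (List.mem_cons_self)
      obtain ⟨h1, h2⟩ := tT_spec hp hd0
      simp only [chk, force_eq, List.all_eq_true] at hchk
      have h3 := hchk d (by
        simp only [List.mem_cons, List.not_mem_nil, or_false]; omega)
      have := ih _ _ _ _ l h1 (by simpa using hlen)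
        (fun d hd' => hd d (List.mem_cons_of_mem _ hd')) h3
        (by rw [← h2, ← hprod]; simp [mul_assoc])
      simp only [encL, List.map_cons, List.sum_cons]
      rw [← add_assoc]
      convert this using 2
      ring

def check (L k s1 s2 s3 : ℕ) : Bool :=
  force (clo k 3000 [s1] 0) fun m1 => force (clo k 3000 [s2] 0) fun m2 =>
    force (clo k 3000 [s3] 0) fun m3 => chk L m1 m2 m3 (k - 1) 1 0 0 0

theorem check_spec {L k s1 s2 s3 c : ℕ} (hk : k ≤ 4) (hk0 : 0 < k) (hc : c < 72)
    (hL : ∀ p < 72, ∀ l < 16, tT p l = c → lL L p = l) (h : check L k s1 s2 s3 = true)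
    (t t' : Fin k → G5)
    (ht : ∀ i, IsReflection5 (t i)) (ht' : ∀ i, IsReflection5 (t' i))
    (hp : (List.ofFn t).prod = ge c) (hp' : (List.ofFn t').prod = ge c)
    (hs : ∃ σ : Equiv.Perm (Fin k), ∀ i, IsConj (t i) (t' (σ i))) :
    SameHurwitzOrbit t t' := by
  choose u hu hu2 using fun i => refl_spec (ht i)
  choose u' hu' hu2' using fun i => refl_spec (ht' i)
  obtain ⟨σ, hσ⟩ := hs
  simp only [check, force_eq] at h
  have hm : ∀ s, ∀ x, (clo k 3000 [s] 0).testBit x = true →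
      SameHurwitzOrbit (dec k s) (dec k x) := fun s =>
    clo_spec hk s 3000 [s] 0
      (by intro x hx; rw [List.mem_singleton.mp hx]; exact Relation.EqvGen.refl _) (by simp)
  have hm1 := hm s1
  have hm2 := hm s2
  have hm3 := hm s3
  clear hm
  generalize clo k 3000 [s1] 0 = m1 at h hm1
  generalize clo k 3000 [s2] 0 = m2 at h hm2
  generalize clo k 3000 [s3] 0 = m3 at h hm3
  have key : ∀ (v : Fin k → ℕ), (∀ i, v i < 16) → (List.ofFn fun i => r (v i)).prod = ge c →
      (pick m1 m2 m3 (∑ i, v i / 8)).testBit (encL (List.ofFn v)) = true ∧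
        dec k (encL (List.ofFn v)) = fun i => r (v i) := by
    intro v hv hvp
    have hd : ∀ d ∈ List.ofFn v, d < 16 := by
      intro d hd
      obtain ⟨i, rfl⟩ := (List.mem_ofFn' _ _).mp hd
      exact hv i
    constructor
    · have h0 : ge 0 = 1 := f_zero
      have := chk_spec L m1 m2 m3 c hc hL (k - 1) 1 0 0 0 (List.ofFn v) (by norm_num)
        (by simp; omega) hd h (by rw [h0, one_mul, List.map_ofFn]; exact hvp)
      rw [List.map_ofFn, List.sum_ofFn, zero_add, zero_add, one_mul] at this
      exact this
    · funext j
      simp only [dec]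
      rw [encL_digit _ hd j (by simp)]
      simp
  have et : t = fun i => r (u i) := funext hu2
  have et' : t' = fun i => r (u' i) := funext hu2'
  obtain ⟨b1, e1⟩ := key u hu (by rw [← et]; exact hp)
  obtain ⟨b2, e2⟩ := key u' hu' (by rw [← et']; exact hp')
  have hsum : ∑ i, u i / 8 = ∑ i, u' i / 8 := by
    rw [← Equiv.sum_comp σ (fun i => u' i / 8)]
    refine Finset.sum_congr rfl fun i _ => type_conj (hu i) (hu' _) ?_
    rw [← hu2, ← hu2']; exact hσ i
  rw [hsum] at b1
  have hpick : ∀ n, ∃ s, ∀ x, (pick m1 m2 m3 n).testBit x = true →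
      SameHurwitzOrbit (dec k s) (dec k x) := by
    intro n
    unfold pick
    split
    · exact ⟨s1, hm1⟩
    · exact ⟨s2, hm2⟩
    · exact ⟨s3, hm3⟩
    · exact ⟨0, by simp⟩
  obtain ⟨s, hs⟩ := hpick (∑ i, u' i / 8)
  have o1 := hs _ b1
  have o2 := hs _ b2
  rw [e1, ← et] at o1
  rw [e2, ← et'] at o2
  exact (o1.symm _ _).trans _ _ _ o2

theorem L0_spec : ∀ p < 72, ∀ l < 16, tT p l = 4 → lL 0x1010100d10101010100210101010101009100b1010101010101005011010101010101010100f1010101010100c1007101010081010101010100e1010100310100610041000100a10 p = l := by decide +kernel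
theorem L1_spec : ∀ p < 72, ∀ l < 16, tT p l = 28 → lL 0x101005011010101010101010100f1010101010100c1007101010081010101010100e1010100310100610041000100a101010100d10101010100210101010101009100b1010101010 p = l := by decide +kernel

theorem check02 : check 0x1010100d10101010100210101010101009100b1010101010101005011010101010101010100f1010101010100c1007101010081010101010100e1010100310100610041000100a10 2 160 160 160 = true := by decide +kernel
theorem check03 : check 0x1010100d10101010100210101010101009100b1010101010101005011010101010101010100f1010101010100c1007101010081010101010100e1010100310100610041000100a10 3 2628 3536 3536 = true := by decide +kernel
theorem check04 : check 0x1010100d10101010100210101010101009100b1010101010101005011010101010101010100f1010101010100c1007101010081010101010100e1010100310100610041000100a10 4 41984 56644 59776 = true := by decide +kernel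
theorem check12 : check 0x101005011010101010101010100f1010101010100c1007101010081010101010100e1010100310100610041000100a101010100d10101010100210101010101009100b1010101010 2 197 197 197 = true := by decide +kernel
theorem check13 : check 0x101005011010101010101010100f1010101010100c1007101010081010101010100e1010100310100610041000100a101010100d10101010100210101010101009100b1010101010 3 3344 2964 2964 = true := by decide +kernel
theorem check14 : check 0x101005011010101010101010100f1010101010100c1007101010081010101010100e1010100310100610041000100a101010100d10101010100210101010101009100b1010101010 4 50496 47360 64644 = true := by decide +kernel


theorem orbit_map {G H : Type*} [Group G] [Group H] (φ : G →* H) {k : ℕ} {t t' : Fin k → G}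
    (h : SameHurwitzOrbit t t') : SameHurwitzOrbit (fun i => φ (t i)) (fun i => φ (t' i)) := by
  induction h with
  | rel x y h =>
    obtain ⟨i, hi, h1, h2, h3⟩ := h
    refine Relation.EqvGen.rel _ _ ⟨i, hi, by simp only [h1], by simp only [h2, map_mul, map_inv], ?_⟩
    intro j hj hj'
    simp only [h3 j hj hj']
  | refl x => exact Relation.EqvGen.refl _
  | symm x y _ ih => exact ih.symm _ _
  | trans x y z _ _ ih1 ih2 => exact ih1.trans _ _ _ ih2

theorem orbit_conj {G : Type*} [Group G] {k : ℕ} {t t' : Fin k → G}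
    (h : SameHurwitzOrbit t t') : ∃ σ : Equiv.Perm (Fin k), ∀ i, IsConj (t i) (t' (σ i)) := by
  induction h with
  | rel x y h =>
    obtain ⟨i, hi, h1, h2, h3⟩ := h
    refine ⟨Equiv.swap ⟨i, Nat.lt_of_succ_lt hi⟩ ⟨i + 1, hi⟩, fun j => ?_⟩
    by_cases e1 : j = ⟨i, Nat.lt_of_succ_lt hi⟩
    · rw [e1, Equiv.swap_apply_left, h2]
      exact isConj_iff.mpr ⟨(x ⟨i + 1, hi⟩)⁻¹, by rw [inv_inv]⟩
    · by_cases e2 : j = ⟨i + 1, hi⟩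
      · rw [e2, Equiv.swap_apply_right, h1]
      · rw [Equiv.swap_apply_of_ne_of_ne e1 e2, h3 j]
        · intro e; exact e1 (Fin.ext e)
        · intro e; exact e2 (Fin.ext e)
  | refl x => exact ⟨1, fun i => IsConj.refl _⟩
  | symm x y _ ih =>
    obtain ⟨σ, h⟩ := ih
    refine ⟨σ⁻¹, fun i => ?_⟩
    have := h (σ⁻¹ i)
    rw [← Equiv.Perm.mul_apply, mul_inv_cancel, Equiv.Perm.one_apply] at this
    exact this.symm
  | trans x y z _ _ ih1 ih2 =>
    obtain ⟨σ, h⟩ := ih1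
    obtain ⟨τ, h'⟩ := ih2
    exact ⟨τ * σ, fun i => (h i).trans (h' (σ i))⟩

theorem refl_conj {t : G5} (g : G5) (h : IsReflection5 t) : IsReflection5 (MulAut.conj g t) := by
  have : IsConj t (MulAut.conj g t) := isConj_iff.mpr ⟨g, rfl⟩
  exact h.imp (fun h => IsConj.trans h this) (Or.imp (fun h => IsConj.trans h this)
    (Or.imp (fun h => IsConj.trans h this) (fun h => IsConj.trans h this)))

end G5aux

theorem g5_short_factorizations (c : G5) (hc : IsCoxeter5 c) (k : ℕ) (hk : k ≤ 4)
    (t t' : Fin k → G5)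
    (ht : ∀ i, IsReflection5 (t i)) (ht' : ∀ i, IsReflection5 (t' i))
    (hp : (List.ofFn t).prod = c) (hp' : (List.ofFn t').prod = c) :
    SameHurwitzOrbit t t' ↔
      ∃ σ : Equiv.Perm (Fin k), ∀ i, IsConj (t i) (t' (σ i)) := by
  refine ⟨G5aux.orbit_conj, fun hs => ?_⟩
  rcases Nat.lt_or_ge k 2 with hk2 | hk2
  · have : t = t' := by
      interval_cases k
      · exact Subsingleton.elim _ _
      · funext i
        have : i = 0 := Subsingleton.elim _ _
        subst this
        simp at hp hp'
        rw [hp, hp']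
    rw [this]
    exact Relation.EqvGen.refl _
  · obtain ⟨x, hx⟩ := G5aux.cox_spec hc
    have red : SameHurwitzOrbit (fun i => MulAut.conj x (t i)) (fun i => MulAut.conj x (t' i)) →
        SameHurwitzOrbit t t' := by
      intro h
      have := G5aux.orbit_map (MulAut.conj x⁻¹).toMonoidHom h
      simpa [mul_assoc] using this
    have hprod : ∀ s : Fin k → G5, (List.ofFn s).prod = c →
        (List.ofFn fun i => MulAut.conj x (s i)).prod = x * c * x⁻¹ := by
      intro s hsp
      have e := map_list_prod (MulAut.conj x) (List.ofFn s)
      rw [List.map_ofFn, hsp, MulAut.conj_apply] at e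
      exact e.symm
    have q := hprod t hp
    have q' := hprod t' hp'
    have w := fun i => G5aux.refl_conj x (ht i)
    have w' := fun i => G5aux.refl_conj x (ht' i)
    have hs' : ∃ σ : Equiv.Perm (Fin k),
        ∀ i, IsConj (MulAut.conj x (t i)) (MulAut.conj x (t' (σ i))) := by
      obtain ⟨σ, h⟩ := hs
      exact ⟨σ, fun i => (MulAut.conj x).toMonoidHom.map_isConj (h i)⟩
    apply red
    rcases hx with hx | hx <;> rw [hx] at q q' <;> clear hprod red hp hp' <;> interval_cases k
    · exact G5aux.check_spec hk (by norm_num) (by norm_num) G5aux.L0_spec G5aux.check02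
        _ _ w w' q q' hs'
    · exact G5aux.check_spec hk (by norm_num) (by norm_num) G5aux.L0_spec G5aux.check03
        _ _ w w' q q' hs'
    · exact G5aux.check_spec hk (by norm_num) (by norm_num) G5aux.L0_spec G5aux.check04
        _ _ w w' q q' hs'
    · exact G5aux.check_spec hk (by norm_num) (by norm_num) G5aux.L1_spec G5aux.check12
        _ _ w w' q q' hs'
    · exact G5aux.check_spec hk (by norm_num) (by norm_num) G5aux.L1_spec G5aux.check13
        _ _ w w' q q' hs'
    · exact G5aux.check_spec hk (by norm_num) (by norm_num) G5aux.L1_spec G5aux.check14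
        _ _ w w' q q' hs'
end
end

section
/- Let W be G4 or G5, and let (t₁,…,t_{m}) and (t′₁,…,t′_{m}) be tuples of reflections of W that lie in the same Hurwitz orbit. Let p and q be indices (1 ≤ p, q ≤ m) such that t_p is conjugate in W to t′_q. Then the two tuples of length m+1 obtained by replacing the entry t_p by the two consecutive equal entries (t_p², t_p²), and the entry t′_q by (t′_q², t′_q²), respectively, also lie in the same Hurwitz orbit. (Since every reflection t of W has order 3, t_p²·t_p² = t_p, so these replacements preserve the product of the tuple.) -/
noncomputable section

open Matrix Complex

namespace HurwitzAux

section Lists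
variable {G : Type*} [Group G]

inductive Step : List G → List G → Prop
  | swap (x y : G) (l : List G) : Step (x :: y :: l) (y :: (y⁻¹ * x * y) :: l)
  | cons (a : G) {l l' : List G} : Step l l' → Step (a :: l) (a :: l')

def Eqv : List G → List G → Prop := Relation.EqvGen Step

theorem Eqv.refl (l : List G) : Eqv l l := Relation.EqvGen.refl l
theorem Eqv.symm {l l' : List G} (h : Eqv l l') : Eqv l' l := Relation.EqvGen.symm _ _ h
theorem Eqv.trans {l l' l'' : List G} (h : Eqv l l') (h' : Eqv l' l'') : Eqv l l'' :=
  Relation.EqvGen.trans _ _ _ h h'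
theorem Step.eqv {l l' : List G} (h : Step l l') : Eqv l l' := Relation.EqvGen.rel _ _ h

theorem Eqv.cons (a : G) {l l' : List G} (h : Eqv l l') : Eqv (a :: l) (a :: l') := by
  induction h with
  | rel _ _ h => exact (Step.cons a h).eqv
  | refl _ => exact Eqv.refl _
  | symm _ _ _ ih => exact ih.symm
  | trans _ _ _ _ _ ih1 ih2 => exact ih1.trans ih2

theorem eqv_swap {x y z : G} (l : List G) (h : x * y = y * z) :
    Eqv (x :: y :: l) (y :: z :: l) := by
  have : z = y⁻¹ * x * y := by rw [mul_assoc, h]; group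
  subst this
  exact (Step.swap x y l).eqv

def dbl : List G → ℕ → List G
  | [], _ => []
  | x :: l, 0 => x ^ 2 :: x ^ 2 :: l
  | x :: l, n + 1 => x :: dbl l n

theorem inv_of_cube {x : G} (hx : x ^ 3 = 1) : x ^ 2 = x⁻¹ := by
  rw [eq_inv_iff_mul_eq_one, ← pow_succ, hx]

theorem local_lemma {x y : G} (hx : x ^ 3 = 1) (hy : y ^ 3 = 1) (hb : x * y * x = y * x * y)
    (l : List G) :
    Eqv (x ^ 2 :: x ^ 2 :: y :: l) (x :: y ^ 2 :: y ^ 2 :: l) := by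
  rw [inv_of_cube hx, inv_of_cube hy]
  have hxx : x⁻¹ * x⁻¹ = x := by
    rw [← inv_of_cube hx]
    calc x ^ 2 * x ^ 2 = x ^ 3 * x := by group
      _ = x := by rw [hx, one_mul]
  have hxx' : x * x = x⁻¹ := by rw [← inv_of_cube hx, pow_two]
  obtain ⟨u, hu⟩ : ∃ u, u = x * y * x⁻¹ := ⟨_, rfl⟩
  have hu2 : u = y⁻¹ * x * y := by
    rw [hu, mul_inv_eq_iff_eq_mul, mul_assoc, mul_assoc, eq_inv_mul_iff_mul_eq, ← mul_assoc, ← mul_assoc, hb]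
  have e3 : x⁻¹ * u⁻¹ = u⁻¹ * y⁻¹ := by
    rw [← _root_.mul_inv_rev, ← _root_.mul_inv_rev, _root_.inv_inj]
    conv_lhs => rw [hu]
    rw [hu2]; group
  have e4 : x⁻¹ * y * x * u⁻¹ = u⁻¹ * x := by
    rw [mul_inv_eq_iff_eq_mul, mul_assoc (u⁻¹), eq_inv_mul_iff_mul_eq]
    rw [hu]
    calc x * y * x⁻¹ * (x⁻¹ * y * x) = x * y * (x⁻¹ * x⁻¹) * y * x := by group
      _ = x * (y * x * y) * x := by rw [hxx]; group
      _ = (x * x) * y * (x * x) := by rw [← hb]; group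
      _ = x * (x * y * x⁻¹) := by rw [hxx']; nth_rw 1 [← hxx']; group
  have s1 : Eqv (x⁻¹ :: x⁻¹ :: y :: l) (x⁻¹ :: y :: u⁻¹ :: l) :=
    (eqv_swap _ (by rw [hu2]; group)).cons _
  have s2 : Eqv (x⁻¹ :: y :: u⁻¹ :: l) ((x⁻¹ * y * x) :: x⁻¹ :: u⁻¹ :: l) :=
    (eqv_swap _ (by group)).symm
  have s3 : Eqv ((x⁻¹ * y * x) :: x⁻¹ :: u⁻¹ :: l) ((x⁻¹ * y * x) :: u⁻¹ :: y⁻¹ :: l) :=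
    (eqv_swap _ e3).cons _
  have s4 : Eqv ((x⁻¹ * y * x) :: u⁻¹ :: y⁻¹ :: l) (u⁻¹ :: x :: y⁻¹ :: l) :=
    eqv_swap _ e4
  have s5 : Eqv (u⁻¹ :: x :: y⁻¹ :: l) (x :: y⁻¹ :: y⁻¹ :: l) :=
    eqv_swap _ (by rw [hu]; group)
  exact s1.trans (s2.trans (s3.trans (s4.trans s5)))

theorem cube_conj {x y : G} (hx : x ^ 3 = 1) : (y⁻¹ * x * y) ^ 3 = 1 := by
  have : (y⁻¹ * x * y) ^ 3 = y⁻¹ * x ^ 3 * y := by simp [pow_succ, mul_assoc]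
  rw [this, hx]; group

theorem Step.cube {l l' : List G} (h : Step l l') :
    (∀ x ∈ l, x ^ 3 = 1) ↔ (∀ x ∈ l', x ^ 3 = 1) := by
  induction h with
  | swap x y l =>
    simp only [List.mem_cons, forall_eq_or_imp]
    have : (y⁻¹ * x * y) ^ 3 = 1 ↔ x ^ 3 = 1 := by
      refine ⟨fun h => ?_, cube_conj⟩
      have := cube_conj (y := y⁻¹) h
      simpa [mul_assoc] using this
    tauto
  | cons a h ih => simp only [List.mem_cons, forall_eq_or_imp, ih]

theorem dbl_fst {s t : G} (l : List G) :
    Eqv (s ^ 2 :: s ^ 2 :: t :: l) (t :: (t⁻¹ * s * t) ^ 2 :: (t⁻¹ * s * t) ^ 2 :: l) :=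
  ((eqv_swap l (z := (t⁻¹ * s * t) ^ 2) (by simp [pow_two, mul_assoc])).cons _).trans
    (eqv_swap _ (by simp [pow_two, mul_assoc]))

theorem dbl_snd {s t : G} (ht : t ^ 3 = 1) (l : List G) :
    Eqv (s :: t ^ 2 :: t ^ 2 :: l) (t ^ 2 :: t ^ 2 :: (t⁻¹ * s * t) :: l) := by
  rw [inv_of_cube ht]
  refine (eqv_swap (z := t * s * t⁻¹) _ (by group)).trans
    ((eqv_swap _ ?_).cons _)
  have h2 := inv_of_cube ht
  have : t * t = t⁻¹ := by rw [← h2, pow_two]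
  have h3 : t⁻¹ * t⁻¹ = t := by
    rw [← _root_.mul_inv_rev, this, inv_inv]
  calc t * s * t⁻¹ * t⁻¹ = t * s * (t⁻¹ * t⁻¹) := by group
    _ = (t⁻¹ * t⁻¹) * s * t := by rw [h3]
    _ = _ := by group

theorem isConj_conj (x y : G) : IsConj x (y⁻¹ * x * y) :=
  isConj_iff.2 ⟨y⁻¹, by simp⟩

theorem Step.track {l l' : List G} (h : Step l l') (hc : ∀ x ∈ l, x ^ 3 = 1) :
    ∀ (n : ℕ) (x : G), l[n]? = some x →
      ∃ (n' : ℕ) (x' : G), l'[n']? = some x' ∧ IsConj x x' ∧ Eqv (dbl l n) (dbl l' n') := by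
  induction h with
  | swap s t l =>
    intro n x hn
    match n with
    | 0 =>
      obtain rfl : s = x := by simpa using hn
      exact ⟨1, _, rfl, isConj_conj _ _, dbl_fst l⟩
    | 1 =>
      obtain rfl : t = x := by simpa using hn
      exact ⟨0, _, rfl, IsConj.refl _, dbl_snd (hc t (by simp)) l⟩
    | n + 2 =>
      exact ⟨n + 2, x, by simpa using hn, IsConj.refl _, (Step.swap s t _).eqv⟩
  | cons a h ih =>
    intro n x hn
    match n with
    | 0 =>
      exact ⟨0, x, by simpa using hn, IsConj.refl _, (h.eqv.cons _).cons _⟩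
    | n + 1 =>
      obtain ⟨n', x', h1, h2, h3⟩ := ih (fun z hz => hc z (by simp [hz])) n x (by simpa using hn)
      exact ⟨n' + 1, x', by simpa using h1, h2, h3.cons a⟩

theorem Step.track' {l l' : List G} (h : Step l l') (hc : ∀ x ∈ l, x ^ 3 = 1) :
    ∀ (n : ℕ) (x : G), l'[n]? = some x →
      ∃ (n' : ℕ) (x' : G), l[n']? = some x' ∧ IsConj x x' ∧ Eqv (dbl l' n) (dbl l n') := by
  induction h with
  | swap s t l =>
    intro n x hn
    match n with
    | 1 =>
      obtain rfl : t⁻¹ * s * t = x := by simpa using hn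
      exact ⟨0, _, rfl, (isConj_conj _ _).symm, (dbl_fst l).symm⟩
    | 0 =>
      obtain rfl : t = x := by simpa using hn
      exact ⟨1, _, rfl, IsConj.refl _, (dbl_snd (hc t (by simp)) l).symm⟩
    | n + 2 =>
      exact ⟨n + 2, x, by simpa using hn, IsConj.refl _, (Step.swap s t _).eqv.symm⟩
  | cons a h ih =>
    intro n x hn
    match n with
    | 0 =>
      exact ⟨0, x, by simpa using hn, IsConj.refl _, ((h.eqv.cons _).cons _).symm⟩
    | n + 1 =>
      obtain ⟨n', x', h1, h2, h3⟩ := ih (fun z hz => hc z (by simp [hz])) n x (by simpa using hn)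
      exact ⟨n' + 1, x', by simpa using h1, h2, h3.cons a⟩

theorem Eqv.cube {l l' : List G} (h : Eqv l l') :
    (∀ x ∈ l, x ^ 3 = 1) ↔ (∀ x ∈ l', x ^ 3 = 1) := by
  induction h with
  | rel _ _ h => exact h.cube
  | refl _ => exact Iff.rfl
  | symm _ _ _ ih => exact ih.symm
  | trans _ _ _ _ _ ih1 ih2 => exact ih1.trans ih2

theorem Eqv.track_both {l l' : List G} (h : Eqv l l') (hc : ∀ x ∈ l, x ^ 3 = 1) :
    (∀ (n : ℕ) (x : G), l[n]? = some x →
      ∃ (n' : ℕ) (x' : G), l'[n']? = some x' ∧ IsConj x x' ∧ Eqv (dbl l n) (dbl l' n')) ∧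
    (∀ (n : ℕ) (x : G), l'[n]? = some x →
      ∃ (n' : ℕ) (x' : G), l[n']? = some x' ∧ IsConj x x' ∧ Eqv (dbl l' n) (dbl l n')) := by
  induction h with
  | rel _ _ h => exact ⟨h.track hc, h.track' hc⟩
  | refl _ => exact ⟨fun n x h => ⟨n, x, h, IsConj.refl _, Eqv.refl _⟩,
      fun n x h => ⟨n, x, h, IsConj.refl _, Eqv.refl _⟩⟩
  | symm _ _ h ih => exact (ih ((Eqv.cube h).2 hc)).symm
  | trans _ _ _ h1 h2 ih1 ih2 =>
    have i1 := ih1 hc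
    have i2 := ih2 ((Eqv.cube h1).1 hc)
    constructor
    · intro n x hn
      obtain ⟨n', x', a1, a2, a3⟩ := i1.1 n x hn
      obtain ⟨n'', x'', b1, b2, b3⟩ := i2.1 n' x' a1
      exact ⟨n'', x'', b1, a2.trans b2, a3.trans b3⟩
    · intro n x hn
      obtain ⟨n', x', a1, a2, a3⟩ := i2.2 n x hn
      obtain ⟨n'', x'', b1, b2, b3⟩ := i1.2 n' x' a1
      exact ⟨n'', x'', b1, a2.trans b2, a3.trans b3⟩

theorem pull {y : G} (hy : y ^ 3 = 1) : ∀ (l : List G) (n : ℕ), l[n]? = some y →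
    ∃ r, Eqv l (y :: r) ∧ Eqv (dbl l n) (y ^ 2 :: y ^ 2 :: r)
  | [], n, h => by simp at h
  | a :: l, 0, h => by
    obtain rfl : a = y := by simpa using h
    exact ⟨l, Eqv.refl _, Eqv.refl _⟩
  | a :: l, n + 1, h => by
    obtain ⟨r, h1, h2⟩ := pull hy l n (by simpa using h)
    exact ⟨(y⁻¹ * a * y) :: r, (h1.cons a).trans (Step.swap a y r).eqv,
      (h2.cons a).trans (dbl_snd hy r)⟩

theorem same_lt : ∀ (l : List G) (n k : ℕ) (x y : G), n < k → l[n]? = some x → l[k]? = some y →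
    x ^ 3 = 1 → y ^ 3 = 1 → x * y * x = y * x * y → Eqv (dbl l n) (dbl l k)
  | [], n, k, x, y, _, h, _, _, _, _ => by simp at h
  | a :: l, 0, 0, x, y, hlt, _, _, _, _, _ => by omega
  | a :: l, n + 1, 0, x, y, hlt, _, _, _, _, _ => by omega
  | a :: l, n + 1, k + 1, x, y, hlt, h1, h2, hx, hy, hb =>
    (same_lt l n k x y (by omega) (by simpa using h1) (by simpa using h2) hx hy hb).cons a
  | a :: l, 0, k + 1, x, y, _, h1, h2, hx, hy, hb => by
    obtain rfl : a = x := by simpa using h1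
    obtain ⟨r, h3, h4⟩ := pull hy l k (by simpa using h2)
    exact ((h3.cons _).cons _).trans ((local_lemma hx hy hb r).trans (h4.symm.cons a))

theorem list_main {l l' : List G} (h : Eqv l l') (hc : ∀ x ∈ l, x ^ 3 = 1)
    (hbr : ∀ x ∈ l', ∀ y ∈ l', IsConj x y → x * y * x = y * x * y)
    (n k : ℕ) (x y : G) (hn : l[n]? = some x) (hk : l'[k]? = some y) (hxy : IsConj x y) :
    Eqv (dbl l n) (dbl l' k) := by
  obtain ⟨n', x', h1, h2, h3⟩ := (h.track_both hc).1 n x hn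
  refine h3.trans ?_
  have hc' := h.cube.1 hc
  have hx' := List.mem_of_getElem? h1
  have hy := List.mem_of_getElem? hk
  have hb := hbr x' hx' y hy (h2.symm.trans hxy)
  rcases lt_trichotomy n' k with hlt | rfl | hlt
  · exact same_lt l' n' k x' y hlt h1 hk (hc' _ hx') (hc' _ hy) hb
  · exact Eqv.refl _
  · exact (same_lt l' k n' y x' hlt hk h1 (hc' _ hy) (hc' _ hx') hb.symm).symm

/-! Transfer to tuples. -/

theorem step_iff {k : ℕ} (t t' : Fin k → G) :
    IsHurwitzMove t t' ↔ Step (List.ofFn t) (List.ofFn t') := by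
  induction k with
  | zero =>
    constructor
    · rintro ⟨i, h, _⟩; omega
    · intro h; simp at h; cases h
  | succ k ih =>
    constructor
    · rintro ⟨i, h, h1, h2, h3⟩
      cases i with
      | zero =>
        obtain ⟨k, rfl⟩ : ∃ k', k = k' + 1 := ⟨k - 1, by omega⟩
        rw [List.ofFn_succ, List.ofFn_succ, List.ofFn_succ (f := t'), List.ofFn_succ (f := fun i => t' i.succ)]
        have e1 : t' 0 = t (Fin.succ 0) := h1
        have e2 : t' (Fin.succ 0) = (t (Fin.succ 0))⁻¹ * t 0 * t (Fin.succ 0) := h2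
        have e3 : (fun i : Fin k => t' i.succ.succ) = fun i => t i.succ.succ := by
          funext i; exact h3 _ (by simp) (by simp)
        rw [e1, e2, e3]
        exact Step.swap _ _ _
      | succ i =>
        rw [List.ofFn_succ, List.ofFn_succ (f := t')]
        have e1 : t' 0 = t 0 := h3 0 (by simp) (by simp)
        rw [e1]
        refine Step.cons _ ((ih _ _).1 ⟨i, by omega, h1, h2, ?_⟩)
        intro j hj1 hj2
        exact h3 j.succ (by simpa using hj1) (by simpa using hj2)
    · intro h
      rw [List.ofFn_succ, List.ofFn_succ (f := t')] at h
      generalize hl : List.ofFn (fun i : Fin k => t i.succ) = l at h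
      generalize hl' : List.ofFn (fun i : Fin k => t' i.succ) = l' at h
      generalize ha : t 0 = a at h
      generalize ha' : t' 0 = a' at h
      cases h with
      | swap x y r =>
        cases k with
        | zero => simp at hl
        | succ k =>
          rw [List.ofFn_succ, List.cons.injEq] at hl hl'
          refine ⟨0, by omega, ?_, ?_, ?_⟩
          · exact ha'.trans hl.1.symm
          · refine hl'.1.trans ?_
            rw [← ha, ← hl.1]; rfl
          · intro j hj1 hj2
            have := List.ofFn_injective (hl.2.trans hl'.2.symm)
            obtain ⟨j, hj⟩ := j
            match j, hj with
            | 0, _ => simp at hj1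
            | 1, _ => simp at hj2
            | j + 2, hj => exact (congrFun this ⟨j, by omega⟩).symm
      | cons _ h =>
        subst hl hl'
        obtain ⟨i, hi, h1, h2, h3⟩ := (ih _ _).2 h
        refine ⟨i + 1, by omega, h1, h2, ?_⟩
        intro j hj1 hj2
        induction j using Fin.cases with
        | zero => rw [ha, ha']
        | succ j => exact h3 j (by simpa using hj1) (by simpa using hj2)

theorem orbit_to_list {k : ℕ} {t t' : Fin k → G} (h : SameHurwitzOrbit t t') :
    Eqv (List.ofFn t) (List.ofFn t') := by
  induction h with
  | rel _ _ h => exact ((step_iff _ _).1 h).eqv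
  | refl _ => exact Eqv.refl _
  | symm _ _ _ ih => exact ih.symm
  | trans _ _ _ _ _ ih1 ih2 => exact ih1.trans ih2

theorem Step.length {l l' : List G} (h : Step l l') : l.length = l'.length := by
  induction h with
  | swap => rfl
  | cons a h ih => simp [ih]

theorem Eqv.length {l l' : List G} (h : Eqv l l') : l.length = l'.length := by
  induction h with
  | rel _ _ h => exact h.length
  | refl _ => rfl
  | symm _ _ _ ih => exact ih.symm
  | trans _ _ _ _ _ ih1 ih2 => exact ih1.trans ih2

theorem list_to_orbit {l l' : List G} (h : Eqv l l') : ∀ {k : ℕ} (t t' : Fin k → G),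
    List.ofFn t = l → List.ofFn t' = l' → SameHurwitzOrbit t t' := by
  induction h with
  | rel _ _ h =>
    rintro k t t' rfl rfl
    exact Relation.EqvGen.rel _ _ ((step_iff _ _).2 h)
  | refl _ =>
    rintro k t t' h1 h2
    rw [List.ofFn_injective (h1.trans h2.symm)]
    exact Relation.EqvGen.refl _
  | symm _ _ _ ih => exact fun t t' h1 h2 => Relation.EqvGen.symm _ _ (ih t' t h2 h1)
  | trans l1 l2 l3 e1 _ ih1 ih2 =>
    intro k t t' h1 h2
    have hl : l2.length = k := by rw [← Eqv.length e1, ← h1]; simp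
    subst hl
    exact Relation.EqvGen.trans _ _ _ (ih1 t l2.get h1 (List.ofFn_get l2))
      (ih2 l2.get t' (List.ofFn_get l2) h2)

theorem ofFn_doubleAt {m : ℕ} (t : Fin m → G) (p : Fin m) :
    List.ofFn (doubleAt t p) = dbl (List.ofFn t) p := by
  induction m with
  | zero => exact p.elim0
  | succ m ih =>
    rw [List.ofFn_succ, List.ofFn_succ (f := t)]
    induction p using Fin.cases with
    | zero =>
      rw [List.ofFn_succ]
      rfl
    | succ p =>
      have : (fun i => doubleAt t p.succ i.succ) = doubleAt (fun i => t i.succ) p := by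
        funext i
        unfold doubleAt
        simp only [Fin.val_succ, Nat.add_lt_add_iff_right]
        split_ifs with h1 h2 h3 h4
        · rfl
        · rfl
        · omega
        · omega
        · exact congrArg t (Fin.ext (by simp; omega))
      rw [this, ih]
      rfl

theorem tuple_main {m : ℕ} {t t' : Fin m → G} (P : G → Prop) (hP : ∀ x, P x → x ^ 3 = 1)
    (hPb : ∀ x y, P x → P y → IsConj x y → x * y * x = y * x * y)
    (ht : ∀ i, P (t i)) (ht' : ∀ i, P (t' i)) (h : SameHurwitzOrbit t t')
    (p q : Fin m) (hpq : IsConj (t p) (t' q)) :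
    SameHurwitzOrbit (doubleAt t p) (doubleAt t' q) := by
  refine list_to_orbit ?_ _ _ (ofFn_doubleAt t p) (ofFn_doubleAt t' q)
  refine list_main (orbit_to_list h) ?_ ?_ p q (t p) (t' q) (by simp) (by simp) hpq
  · intro x hx
    obtain ⟨i, rfl⟩ := (List.mem_ofFn' _ _).1 hx
    exact hP _ (ht i)
  · intro x hx y hy
    obtain ⟨i, rfl⟩ := (List.mem_ofFn' _ _).1 hx
    obtain ⟨j, rfl⟩ := (List.mem_ofFn' _ _).1 hy
    exact hPb _ _ (ht' i) (ht' j)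

end Lists

section Classes
variable {G : Type*} [Group G]

def C (a b : G) : Set G := {a, b, a * b * a⁻¹, a⁻¹ * b * a}

def Br (x y : G) : Prop := x * y * x = y * x * y

theorem Br.symm {x y : G} (h : Br x y) : Br y x := Eq.symm h

theorem Br.conj {x y : G} (h : Br x y) (g : G) : Br (g * x * g⁻¹) (g * y * g⁻¹) := by
  unfold Br at *
  calc g * x * g⁻¹ * (g * y * g⁻¹) * (g * x * g⁻¹) = g * (x * y * x) * g⁻¹ := by group
    _ = g * (y * x * y) * g⁻¹ := by rw [h]
    _ = _ := by group

theorem Br.inv {x y : G} (h : Br x y) : Br x⁻¹ y⁻¹ := by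
  have := congrArg (·⁻¹) h
  simpa [Br, mul_assoc] using this

theorem sq_inv {a : G} (ha : a ^ 3 = 1) : a * a = a⁻¹ := by rw [← inv_of_cube ha, pow_two]

theorem inv_sq {a : G} (ha : a ^ 3 = 1) : a⁻¹ * a⁻¹ = a := by
  rw [← _root_.mul_inv_rev, sq_inv ha, inv_inv]

theorem conj_a_mem {a b : G} (ha : a ^ 3 = 1) {x : G} (hx : x ∈ C a b) : a * x * a⁻¹ ∈ C a b := by
  simp only [C, Set.mem_insert_iff, Set.mem_singleton_iff] at *
  rcases hx with rfl | rfl | rfl | rfl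
  · left; group
  · right; right; left; rfl
  · right; right; right
    calc a * (a * b * a⁻¹) * a⁻¹ = (a * a) * b * (a⁻¹ * a⁻¹) := by group
      _ = _ := by rw [sq_inv ha, inv_sq ha]
  · right; left; group

theorem br_a {a b : G} (ha : a ^ 3 = 1) (hb : Br a b) {x : G} (hx : x ∈ C a b) : Br a x := by
  simp only [C, Set.mem_insert_iff, Set.mem_singleton_iff] at *
  rcases hx with rfl | rfl | rfl | rfl
  · rfl
  · exact hb
  · simpa using hb.conj a
  · simpa using hb.conj a⁻¹

theorem rel1 {a b : G} (hb : Br a b) : a * b * a⁻¹ = b⁻¹ * a * b := by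
  unfold Br at hb
  rw [mul_inv_eq_iff_eq_mul, mul_assoc, mul_assoc, eq_inv_mul_iff_mul_eq, ← mul_assoc,
    ← mul_assoc, hb]

theorem C_swap {a b : G} (hb : Br a b) : C a b = C b a := by
  unfold C
  rw [rel1 hb, rel1 hb.symm]
  ext x
  simp only [Set.mem_insert_iff, Set.mem_singleton_iff]
  tauto

theorem C_cube {a b : G} (ha : a ^ 3 = 1) (hb : b ^ 3 = 1) {x : G} (hx : x ∈ C a b) :
    x ^ 3 = 1 := by
  simp only [C, Set.mem_insert_iff, Set.mem_singleton_iff] at *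
  rcases hx with rfl | rfl | rfl | rfl
  · exact ha
  · exact hb
  · simpa using cube_conj (y := a⁻¹) hb
  · exact cube_conj hb

theorem C_br {a b : G} (ha : a ^ 3 = 1) (hb : b ^ 3 = 1) (h : Br a b) {x y : G} (hx : x ∈ C a b)
    (hy : y ∈ C a b) : Br x y := by
  have hbx : ∀ z ∈ C a b, Br b z := fun z hz => br_a hb h.symm (by rwa [C_swap h] at hz)
  have key : ∀ z ∈ C a b, Br (a * b * a⁻¹) z := by
    intro z hz
    have h1 := conj_a_mem ha (conj_a_mem ha hz)
    have h2 := (hbx _ h1).conj a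
    have e : a * (a * (a * z * a⁻¹) * a⁻¹) * a⁻¹ = z := by
      calc _ = a ^ 3 * z * (a ^ 3)⁻¹ := by simp [pow_succ, mul_assoc]
        _ = z := by rw [ha]; group
    rwa [e] at h2
  have hx' := hx
  simp only [C, Set.mem_insert_iff, Set.mem_singleton_iff] at hx
  rcases hx with rfl | rfl | rfl | rfl
  · exact br_a ha h hy
  · exact hbx _ hy
  · exact key _ hy
  · have h1 := (hbx _ (conj_a_mem ha hy)).conj a⁻¹
    have e : a⁻¹ * (a * y * a⁻¹) * a⁻¹⁻¹ = y := by group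
    rw [e] at h1
    simpa using h1

theorem closed_closure {T S : Set G} (hT : ∀ g ∈ T, g ^ 3 = 1)
    (hS : ∀ g ∈ T, ∀ x ∈ S, g * x * g⁻¹ ∈ S) {g : G} (hg : g ∈ Subgroup.closure T) {x : G}
    (hx : x ∈ S) : g * x * g⁻¹ ∈ S := by
  have : (∀ x ∈ S, g * x * g⁻¹ ∈ S) ∧ (∀ x ∈ S, g⁻¹ * x * g⁻¹⁻¹ ∈ S) := by
    induction hg using Subgroup.closure_induction with
    | mem g hg =>
      refine ⟨hS g hg, fun x hx => ?_⟩
      have := hS g hg _ (hS g hg x hx)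
      rw [← sq_inv (hT g hg)]
      simpa [mul_assoc] using this
    | one => simp
    | mul x y _ _ hx hy =>
      constructor
      · intro z hz
        simpa [mul_assoc] using hx.1 _ (hy.1 z hz)
      · intro z hz
        simpa [mul_assoc] using hy.2 _ (hx.2 z hz)
    | inv x _ hx => exact ⟨hx.2, by simpa using hx.1⟩
  exact this.1 x hx

theorem pair_br {a b : G} (ha : a ^ 3 = 1) (hb : b ^ 3 = 1) (h : Br a b) {H : Subgroup G}
    (hH : ∀ g ∈ H, ∀ x ∈ C a b, g * x * g⁻¹ ∈ C a b) {x y g : G}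
    (hx : x ∈ C a b ∨ x⁻¹ ∈ C a b) (hg : g ∈ H) (hy : g * x * g⁻¹ = y) :
    x * y * x = y * x * y := by
  subst hy
  rcases hx with hx | hx
  · exact C_br ha hb h hx (hH g hg x hx)
  · have := (C_br ha hb h hx (hH g hg _ hx)).inv
    have e : (g * x⁻¹ * g⁻¹)⁻¹ = g * x * g⁻¹ := by group
    rw [e, inv_inv] at this
    exact this

/-! G5 -/

theorem g5_br {a b : G} (hb : b ^ 3 = 1) (h : a * b * a * b = b * a * b * a) :
    b * (b * a * b⁻¹) * b⁻¹ = a * (b * a * b⁻¹) * a⁻¹ ∧ Br a (b * a * b⁻¹) := by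
  have e2 : b * (b * a * b⁻¹) * b⁻¹ = b⁻¹ * a * b := by
    calc _ = (b * b) * a * (b⁻¹ * b⁻¹) := by group
      _ = _ := by rw [sq_inv hb, inv_sq hb]
  have e3 : b⁻¹ * a * b * a = a * (b * a * b⁻¹) := by
    calc b⁻¹ * a * b * a = b⁻¹ * b⁻¹ * (b * a * b * a) := by group
      _ = b * (a * b * a * b) := by rw [inv_sq hb, h]
      _ = (b * a * b * a) * b := by group
      _ = a * b * a * (b * b) := by rw [← h]; group
      _ = _ := by rw [sq_inv hb]; group
  have e4 : b * (b * a * b⁻¹) * b⁻¹ = a * (b * a * b⁻¹) * a⁻¹ := by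
    rw [e2, eq_mul_inv_iff_mul_eq, e3]
  refine ⟨e4, ?_⟩
  -- conjugating `a₂ a = a a₁` by b gives `a a₁ = a₁ a₂`
  have e5 : a * (b * a * b⁻¹) = b * a * b⁻¹ * (b⁻¹ * a * b) := by
    have := congrArg (fun z => b * z * b⁻¹) e3
    calc a * (b * a * b⁻¹) = b * (b⁻¹ * a * b * a) * b⁻¹ := by group
      _ = b * (a * (b * a * b⁻¹)) * b⁻¹ := by rw [e3]
      _ = b * a * b⁻¹ * (b * (b * a * b⁻¹) * b⁻¹) := by group
      _ = _ := by rw [e2]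
  unfold Br
  calc a * (b * a * b⁻¹) * a = b * a * b⁻¹ * (b⁻¹ * a * b) * a := by rw [← e5]
    _ = b * a * b⁻¹ * (b⁻¹ * a * b * a) := by group
    _ = b * a * b⁻¹ * (a * (b * a * b⁻¹)) := by rw [e3]
    _ = _ := by group

theorem g5_closed {a b : G} (ha : a ^ 3 = 1) (hb : b ^ 3 = 1)
    (h : a * b * a * b = b * a * b * a) {x : G} (hx : x ∈ C a (b * a * b⁻¹)) :
    b * x * b⁻¹ ∈ C a (b * a * b⁻¹) := by
  obtain ⟨h1, h2⟩ := g5_br hb h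
  have e0 : b * (a * (b * a * b⁻¹) * a⁻¹) * b⁻¹ = a := by
    rw [← h1]
    calc _ = b ^ 3 * a * (b ^ 3)⁻¹ := by simp [pow_succ, mul_assoc]
      _ = a := by rw [hb]; group
  have h3 := rel1 h2
  have h4 := rel1 h2.symm
  have e1 : b * (a⁻¹ * (b * a * b⁻¹) * a) * b⁻¹ = a⁻¹ * (b * a * b⁻¹) * a := by
    rw [← h4]
    have hc : (b * a * b⁻¹) ^ 3 = 1 := by simpa using cube_conj (y := b⁻¹) ha
    generalize hc1 : b * a * b⁻¹ = c at *
    calc b * (c * a * c⁻¹) * b⁻¹ = (b * c * b⁻¹) * (b * a * b⁻¹) * (b * c * b⁻¹)⁻¹ := by group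
      _ = (c⁻¹ * a * c) * c * (c⁻¹ * a * c)⁻¹ := by rw [h1, hc1, h3]
      _ = c⁻¹ * (a * c * a⁻¹) * c := by group
      _ = (c⁻¹ * c⁻¹) * a * (c * c) := by rw [h3]; group
      _ = _ := by rw [inv_sq hc, sq_inv hc]
  simp only [C, Set.mem_insert_iff, Set.mem_singleton_iff] at *
  rcases hx with rfl | rfl | rfl | rfl
  · right; left; rfl
  · right; right; left; exact h1
  · left; exact e0
  · right; right; right; exact e1

theorem g5_pair {a b : G} (ha : a ^ 3 = 1) (hb : b ^ 3 = 1)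
    (h : a * b * a * b = b * a * b * a) (hgen : Subgroup.closure {a, b} = ⊤) {x y : G}
    (hx : IsConj a x ∨ IsConj (a ^ 2) x) :
    x ^ 3 = 1 ∧ (IsConj x y → x * y * x = y * x * y) := by
  have hc : (b * a * b⁻¹) ^ 3 = 1 := by simpa using cube_conj (y := b⁻¹) ha
  have hH : ∀ g ∈ (⊤ : Subgroup G), ∀ x ∈ C a (b * a * b⁻¹), g * x * g⁻¹ ∈ C a (b * a * b⁻¹) := by
    intro g hg x hx
    rw [← hgen] at hg
    refine closed_closure ?_ ?_ hg hx
    · rintro g (rfl | rfl) <;> assumption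
    · rintro g (rfl | rfl) x hx
      · exact conj_a_mem ha hx
      · exact g5_closed ha hb h hx
  have hx' : x ∈ C a (b * a * b⁻¹) ∨ x⁻¹ ∈ C a (b * a * b⁻¹) := by
    rcases hx with hx | hx
    · obtain ⟨c, rfl⟩ := isConj_iff.1 hx
      exact Or.inl (hH c trivial a (by simp [C]))
    · obtain ⟨c, rfl⟩ := isConj_iff.1 hx
      right
      have := hH c trivial a (by simp [C])
      rw [inv_of_cube ha]
      convert this using 1
      group
  refine ⟨?_, fun hxy => ?_⟩
  · rcases hx' with hx | hx
    · exact C_cube ha hc hx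
    · simpa using C_cube ha hc hx
  · obtain ⟨c, hy⟩ := isConj_iff.1 hxy
    exact pair_br ha hc (g5_br hb h).2 hH hx' (g := c) trivial hy

end Classes

theorem ga3 : ga ^ 3 = 1 := by
  have := PresentedGroup.one_of_mem (rels := g5Rels) (x := FreeGroup.of 0 ^ 3) (by simp [g5Rels])
  simpa [ga, PresentedGroup.of] using this

theorem gb3 : gb ^ 3 = 1 := by
  have := PresentedGroup.one_of_mem (rels := g5Rels) (x := FreeGroup.of 1 ^ 3) (by simp [g5Rels])
  simpa [gb, PresentedGroup.of] using this

theorem gab : ga * gb * ga * gb = gb * ga * gb * ga := by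
  have := PresentedGroup.one_of_mem (rels := g5Rels)
    (x := FreeGroup.of 0 * FreeGroup.of 1 * FreeGroup.of 0 * FreeGroup.of 1 *
      (FreeGroup.of 1 * FreeGroup.of 0 * FreeGroup.of 1 * FreeGroup.of 0)⁻¹) (by simp [g5Rels])
  rw [map_mul, map_inv, mul_inv_eq_one] at this
  simpa [ga, gb, PresentedGroup.of] using this

theorem gen5 : Subgroup.closure {ga, gb} = ⊤ := by
  rw [← PresentedGroup.closure_range_of g5Rels]
  congr 1
  ext x
  simp [ga, gb, Fin.exists_fin_two, eq_comm]

theorem refl5 {x : G5} (hx : IsReflection5 x) :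
    x ^ 3 = 1 ∧ ∀ y, IsConj x y → x * y * x = y * x * y := by
  have key : (IsConj ga x ∨ IsConj (ga ^ 2) x) ∨ (IsConj gb x ∨ IsConj (gb ^ 2) x) := by
    rcases hx with h | h | h | h
    · exact Or.inl (Or.inl h)
    · exact Or.inr (Or.inl h)
    · exact Or.inl (Or.inr h)
    · exact Or.inr (Or.inr h)
  rcases key with h | h
  · exact ⟨(g5_pair (y := x) ga3 gb3 gab gen5 h).1,
      fun y => (g5_pair ga3 gb3 gab gen5 h).2⟩
  · have gen' : Subgroup.closure {gb, ga} = ⊤ := by rw [Set.pair_comm]; exact gen5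
    exact ⟨(g5_pair (y := x) gb3 ga3 gab.symm gen' h).1,
      fun y => (g5_pair gb3 ga3 gab.symm gen' h).2⟩

/-! G4 -/

theorem w_rel : ω ^ 2 + ω + 1 = 0 := by
  have h : IsPrimitiveRoot ω 3 := by
    have := Complex.isPrimitiveRoot_exp 3 (by norm_num)
    simpa [ω] using this
  have := h.geom_sum_eq_zero (by norm_num)
  simp [Finset.sum_range_succ] at this
  linear_combination this

/-- `s • Q_u * diag(1,v)`. -/
def M2 (s u v : ℂ) : Matrix (Fin 2) (Fin 2) ℂ :=
  !![s * ((ω - ω ^ 2) / 3), s * u * v; s * (-2 * u ^ 2) / 3, -s * v * ((ω - ω ^ 2) / 3)]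

def M1 (s v : ℂ) : Matrix (Fin 2) (Fin 2) ℂ := !![s, 0; 0, s * v]

def E (M : Matrix (Fin 2) (Fin 2) ℂ) : Prop :=
  ∃ s u v : ℂ, s ^ 2 = 1 ∧ u ^ 3 = 1 ∧ v ^ 3 = 1 ∧ (M = M1 s v ∨ M = M2 s u v)

theorem cube_cases {u : ℂ} (hu : u ^ 3 = 1) : u = 1 ∨ u = ω ∨ u = ω ^ 2 := by
  have hw := w_rel
  have : (u - 1) * ((u - ω) * (u - ω ^ 2)) = 0 := by grind
  rcases mul_eq_zero.1 this with h | h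
  · left; linear_combination h
  · rcases mul_eq_zero.1 h with h | h
    · right; left; linear_combination h
    · right; right; linear_combination h

theorem w3 : ω ^ 3 = 1 := by linear_combination (ω - 1) * w_rel

theorem E_A {M : Matrix (Fin 2) (Fin 2) ℂ} (h : E M) : E (AMat * M) := by
  have hw := w_rel
  have hw3 := w3
  obtain ⟨s, u, v, hs, hu, hv, rfl | rfl⟩ := h
  · refine ⟨s, u, ω * v, hs, hu, by rw [mul_pow, hv, hw3, one_mul], Or.inl ?_⟩
    ext i j; fin_cases i <;> fin_cases j <;> simp [AMat, M1, Matrix.mul_apply] <;> ring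
  · refine ⟨s, u * ω ^ 2, ω * v, hs, by grind, by grind, Or.inr ?_⟩
    ext i j; fin_cases i <;> fin_cases j <;> simp [AMat, M2, Matrix.mul_apply] <;> grind

theorem E_B {M : Matrix (Fin 2) (Fin 2) ℂ} (h : E M) : E (BMat * M) := by
  have hw := w_rel
  have hw3 := w3
  obtain ⟨s, u, v, hs, hu, hv, rfl | rfl⟩ := h
  · refine ⟨s, ω, ω * v, hs, hw3, by grind, Or.inr ?_⟩
    ext i j; fin_cases i <;> fin_cases j <;> simp [BMat, M1, M2, Matrix.mul_apply] <;> grind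
  · rcases cube_cases hu with rfl | rfl | rfl
    · refine ⟨s, 1, ω * v, hs, by simp, by grind, Or.inr ?_⟩
      ext i j; fin_cases i <;> fin_cases j <;> simp [BMat, M1, M2, Matrix.mul_apply] <;> grind
    · refine ⟨-s, ω ^ 2, ω * v, by grind, by grind, by grind, Or.inr ?_⟩
      ext i j; fin_cases i <;> fin_cases j <;> simp [BMat, M1, M2, Matrix.mul_apply] <;> grind
    · refine ⟨-s, 1, ω * v, by grind, by simp, by grind, Or.inl ?_⟩
      ext i j; fin_cases i <;> fin_cases j <;> simp [BMat, M1, M2, Matrix.mul_apply] <;> grind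

theorem inv_of_cube' {g : GL (Fin 2) ℂ} (h : g ^ 3 = 1) : g⁻¹ = g * g := (sq_inv h).symm

def gA : GL (Fin 2) ℂ := Matrix.GeneralLinearGroup.mkOfDetNeZero AMat (by
  have := w3
  simp [AMat, Matrix.det_fin_two]
  intro h; simp [h] at this)

def gB : GL (Fin 2) ℂ := Matrix.GeneralLinearGroup.mkOfDetNeZero BMat (by
  have := w3
  have h0 : ω ≠ 0 := by intro h; simp [h] at this
  have hw := w_rel
  have : BMat.det = ω := by
    simp [BMat, Matrix.det_fin_two]; grind
  rwa [this])

theorem gA_coe : (gA : Matrix (Fin 2) (Fin 2) ℂ) = AMat := rfl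
theorem gB_coe : (gB : Matrix (Fin 2) (Fin 2) ℂ) = BMat := rfl

theorem gA3 : gA ^ 3 = 1 := by
  have hw := w_rel
  apply Units.ext
  rw [Units.val_pow_eq_pow_val, gA_coe, Units.val_one]
  ext i j; fin_cases i <;> fin_cases j <;> simp [AMat, Matrix.mul_apply, pow_succ] <;> grind

theorem gB3 : gB ^ 3 = 1 := by
  have hw := w_rel
  apply Units.ext
  rw [Units.val_pow_eq_pow_val, gB_coe, Units.val_one]
  ext i j; fin_cases i <;> fin_cases j <;> simp [BMat, Matrix.mul_apply, pow_succ] <;> grind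

theorem gAB : Br gA gB := by
  have hw := w_rel
  apply Units.ext
  simp only [Units.val_mul, gA_coe, gB_coe]
  ext i j; fin_cases i <;> fin_cases j <;> simp [AMat, BMat, Matrix.mul_apply] <;> grind

theorem G4_eq : G4 = Subgroup.closure {gA, gB} := by
  unfold G4
  congr 1
  ext g
  simp [Units.ext_iff, gA_coe, gB_coe]

theorem G4_E {g : GL (Fin 2) ℂ} (hg : g ∈ G4) : E (g : Matrix (Fin 2) (Fin 2) ℂ) := by
  rw [G4_eq] at hg
  induction hg using Subgroup.closure_induction_left with
  | one =>
    refine ⟨1, 1, 1, by simp, by simp, by simp, Or.inl ?_⟩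
    ext i j; fin_cases i <;> fin_cases j <;> simp [M1]
  | mul_left x hx y _ h =>
    rcases hx with rfl | rfl
    · exact E_A h
    · exact E_B h
  | inv_mul_cancel x hx y _ h =>
    rcases hx with rfl | rfl
    · rw [inv_of_cube' gA3, mul_assoc]; exact E_A (E_A h)
    · rw [inv_of_cube' gB3, mul_assoc]; exact E_B (E_B h)

theorem C_of_u {u : ℂ} (hu : u ^ 3 = 1) :
    ∃ c ∈ C gA gB, (c : Matrix (Fin 2) (Fin 2) ℂ) = M2 1 u ω := by
  have hw := w_rel
  have hw3 := w3
  rcases cube_cases hu with rfl | rfl | rfl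
  · refine ⟨gA * gB * gA⁻¹, by simp [C], ?_⟩
    rw [inv_of_cube' gA3]
    simp only [Units.val_mul, gA_coe, gB_coe]
    ext i j; fin_cases i <;> fin_cases j <;> simp [AMat, BMat, M2, Matrix.mul_apply] <;> grind
  · refine ⟨gB, by simp [C], ?_⟩
    rw [gB_coe]
    ext i j; fin_cases i <;> fin_cases j <;> simp [BMat, M2] <;> grind
  · refine ⟨gA⁻¹ * gB * gA, by simp [C], ?_⟩
    rw [inv_of_cube' gA3]
    simp only [Units.val_mul, gA_coe, gB_coe]
    ext i j; fin_cases i <;> fin_cases j <;> simp [AMat, BMat, M2, Matrix.mul_apply] <;> grind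

theorem refl4_mem {g : GL (Fin 2) ℂ} (hg : g ∈ G4) (h1 : g ≠ 1)
    (hd : ((g : Matrix (Fin 2) (Fin 2) ℂ) - 1).det = 0) : g ∈ C gA gB ∨ g⁻¹ ∈ C gA gB := by
  have hw := w_rel
  have hw3 := w3
  obtain ⟨s, u, v, hs, hu, hv, h | h⟩ := G4_E hg
  · rw [h] at hd
    simp [M1, Matrix.det_fin_two] at hd
    have hs1 : s = 1 := by
      rcases hd with hd | hd
      · linear_combination hd
      · have : s * v = 1 := by linear_combination hd
        grind
    subst hs1
    rcases cube_cases hv with rfl | rfl | rfl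
    · exfalso; apply h1; apply Units.ext; rw [h]
      ext i j; fin_cases i <;> fin_cases j <;> simp [M1]
    · left
      have : g = gA := by
        apply Units.ext; rw [h, gA_coe]
        ext i j; fin_cases i <;> fin_cases j <;> simp [M1, AMat]
      rw [this]; simp [C]
    · right
      have : g⁻¹ = gA := by
        rw [inv_eq_iff_mul_eq_one]
        apply Units.ext; rw [Units.val_mul, h, gA_coe]
        ext i j; fin_cases i <;> fin_cases j <;> simp [M1, AMat, Matrix.mul_apply] <;> grind
      rw [this]; simp [C]
  · rw [h] at hd
    simp [M2, Matrix.det_fin_two] at hd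
    have hd' : 1 + v - s * ((ω - ω ^ 2) / 3) * (1 - v) = 0 := by
      grind
    rcases cube_cases hv with rfl | rfl | rfl
    · exfalso; norm_num at hd'
    · left
      have hs1 : s = 1 := by grind
      obtain ⟨c, hc, hc'⟩ := C_of_u hu
      have : g = c := by apply Units.ext; rw [h, hc', hs1]
      rwa [this]
    · right
      have hs1 : s = -1 := by grind
      obtain ⟨c, hc, hc'⟩ := C_of_u (u := u * ω ^ 2) (by grind)
      have : g⁻¹ = c := by
        rw [inv_eq_iff_mul_eq_one]
        apply Units.ext; rw [Units.val_mul, h, hc', hs1]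
        ext i j; fin_cases i <;> fin_cases j <;> simp [M2, Matrix.mul_apply] <;> grind
      rwa [this]

theorem refl4 {x : G4} (hx : IsReflection x) :
    x ^ 3 = 1 ∧ ∀ y, IsConj x y → x * y * x = y * x * y := by
  obtain ⟨x, hxG⟩ := x
  have hm : x ∈ C gA gB ∨ x⁻¹ ∈ C gA gB :=
    refl4_mem hxG (fun h => hx.1 (Subtype.ext h)) hx.2
  refine ⟨Subtype.ext ?_, ?_⟩
  · show x ^ 3 = 1
    rcases hm with hx | hx
    · exact C_cube gA3 gB3 hx
    · simpa using C_cube gA3 gB3 hx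
  · rintro ⟨y, hyG⟩ hxy
    obtain ⟨⟨c, hc⟩, hy⟩ := isConj_iff.1 hxy
    have hy' : c * x * c⁻¹ = y := congrArg Subtype.val hy
    apply Subtype.ext
    refine pair_br (H := G4) gA3 gB3 gAB ?_ hm hc hy'
    intro g hg z hz
    rw [G4_eq] at hg
    refine closed_closure ?_ ?_ hg hz
    · rintro g (rfl | rfl)
      · exact gA3
      · exact gB3
    · rintro g (rfl | rfl) z hz
      · exact conj_a_mem gA3 hz
      · rw [C_swap gAB] at hz ⊢
        exact conj_a_mem gB3 hz

end HurwitzAux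

theorem doubling_preserves_orbit :
    (∀ (m : ℕ) (t t' : Fin m → G4), (∀ i, IsReflection (t i)) →
      (∀ i, IsReflection (t' i)) → SameHurwitzOrbit t t' →
      ∀ p q : Fin m, IsConj (t p) (t' q) →
        SameHurwitzOrbit (doubleAt t p) (doubleAt t' q)) ∧
    (∀ (m : ℕ) (t t' : Fin m → G5), (∀ i, IsReflection5 (t i)) →
      (∀ i, IsReflection5 (t' i)) → SameHurwitzOrbit t t' →
      ∀ p q : Fin m, IsConj (t p) (t' q) →
        SameHurwitzOrbit (doubleAt t p) (doubleAt t' q)) := by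
  constructor
  · intro m t t' ht ht' h p q hpq
    exact HurwitzAux.tuple_main IsReflection (fun x hx => (HurwitzAux.refl4 hx).1)
      (fun x y hx _ hxy => (HurwitzAux.refl4 hx).2 y hxy) ht ht' h p q hpq
  · intro m t t' ht ht' h p q hpq
    exact HurwitzAux.tuple_main IsReflection5 (fun x hx => (HurwitzAux.refl5 hx).1)
      (fun x y hx _ hxy => (HurwitzAux.refl5 hx).2 y hxy) ht ht' h p q hpq
end
end
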